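/- Let G and H be groups whose endomorphism monoids End(G) and End(H) are isomorphic as monoids (semigroups). If G is a Schmidt group with parameters p, q, v (a non-nilpotent finite group all of whose proper subgroups are nilpotent, with derived subgroup a p-group and cyclic Sylow q-subgroup of order q^v), then H is also a Schmidt group with the same parameters p, q, v. -/

import Mathlib

/-- `G` is a Schmidt group with parameters `p, q, v`: a finite non-nilpotent
group all of whose proper subgroups are nilpotent, whose derived subgroup is a
`p`-group, and which decomposes as `G = G' ⋊ C(q^v)`. -/
def IsSchmidtGroup (p q v : ℕ) (G : Type*) [Group G] : Prop :=
  Finite G ∧ ¬ Group.IsNilpotent G ∧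
    (∀ K : Subgroup G, K ≠ ⊤ → Group.IsNilpotent K) ∧
    IsPGroup p (commutator G) ∧
    ∃ b : G, orderOf b = q ^ v ∧
      commutator G ⊔ Subgroup.zpowers b = ⊤ ∧
      commutator G ⊓ Subgroup.zpowers b = ⊥

open Subgroup
open scoped Pointwise

/-- An element of `Monoid.End G`, viewed as a homomorphism. -/
def Monoid.End.toHom {G : Type*} [Group G] (f : Monoid.End G) : G →* G := f

@[simp]
theorem Monoid.End.toHom_apply {G : Type*} [Group G] (f : Monoid.End G) (x : G) :
    f.toHom x = f x := rfl

/-- Elements of coprime prime-power orders in a finite nilpotent group commute. -/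
theorem Group.IsNilpotent.commute_of_pow_prime_pow_eq_one {K : Type*} [Group K] [Finite K]
    (hK : Group.IsNilpotent K) {p q : ℕ} (hp : p.Prime) (hq : q.Prime) (hpq : p ≠ q) {x y : K}
    {a b : ℕ} (hx : x ^ p ^ a = 1) (hy : y ^ q ^ b = 1) : Commute x y := by
  have : Fact p.Prime := ⟨hp⟩
  have : Fact q.Prime := ⟨hq⟩
  have key : ∀ {r : ℕ} {z : K} {n : ℕ}, z ^ r ^ n = 1 → IsPGroup r (zpowers z) := by
    rintro r z n hz ⟨_, k, rfl⟩
    refine ⟨n, Subtype.ext ?_⟩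
    change (z ^ k) ^ r ^ n = 1
    rw [← zpow_natCast, ← zpow_mul, mul_comm, zpow_mul, zpow_natCast, hz, one_zpow]
  obtain ⟨P, hP⟩ := (key hx).exists_le_sylow
  obtain ⟨Q, hQ⟩ := (key hy).exists_le_sylow
  have normal := (Group.isNilpotent_of_finite_tfae (G := K)).out 0 3 |>.mp hK
  exact commute_of_normal_of_disjoint _ _ (normal p ⟨hp⟩ P) (normal q ⟨hq⟩ Q)
    (IsPGroup.disjoint_of_ne p q hpq _ _ P.isPGroup' Q.isPGroup') x y
    (hP (mem_zpowers x)) (hQ (mem_zpowers y))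

theorem IsPGroup.exists_pow_eq_one_of_mem {G : Type*} [Group G] {p : ℕ} {S : Subgroup G}
    (hS : IsPGroup p S) {x : G} (hx : x ∈ S) : ∃ k, x ^ p ^ k = 1 := by
  obtain ⟨k, hk⟩ := hS ⟨x, hx⟩
  exact ⟨k, congrArg Subtype.val hk⟩

/-- An element whose order is both a power of `p` and a power of `q` is trivial. -/
theorem eq_one_of_pow_prime_pow_eq_one {G : Type*} [Group G] {p q : ℕ} (hp : p.Prime)
    (hq : q.Prime) (hpq : p ≠ q) {x : G} {a b : ℕ} (hx : x ^ p ^ a = 1) (hy : x ^ q ^ b = 1) :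
    x = 1 := by
  have hcop : Nat.Coprime (p ^ a) (q ^ b) := Nat.coprime_pow_primes a b hp hq hpq
  rw [← orderOf_eq_one_iff]
  exact Nat.eq_one_of_dvd_coprimes hcop (orderOf_dvd_of_pow_eq_one hx)
    (orderOf_dvd_of_pow_eq_one hy)

/-- A Schmidt group together with a generator `b` of a Sylow `q`-subgroup and the retraction `e`
onto `zpowers b` with kernel the commutator subgroup. -/
structure IsSchmidtRetraction (p q v : ℕ) {G : Type*} [Group G] (b : G) (e : Monoid.End G) :
    Prop where
  finite : Finite G
  not_nilpotent : ¬ Group.IsNilpotent G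
  nilpotent_of_ne_top : ∀ K : Subgroup G, K ≠ ⊤ → Group.IsNilpotent K
  isPGroup : IsPGroup p (commutator G)
  prime_left : p.Prime
  prime_right : q.Prime
  ne : p ≠ q
  pos : 1 ≤ v
  orderOf_eq : orderOf b = q ^ v
  map_gen : e b = b
  map_mem : ∀ g, e g ∈ zpowers b
  map_eq_one_iff : ∀ g, e g = 1 ↔ g ∈ commutator G

theorem IsSchmidtGroup.exists_retraction {p q v : ℕ} {G : Type*} [Group G]
    (h : IsSchmidtGroup p q v G) (hp : p.Prime) (hq : q.Prime) (hpq : p ≠ q) (hv : 1 ≤ v) :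
    ∃ (b : G) (e : Monoid.End G), IsSchmidtRetraction p q v b e := by
  obtain ⟨hfin, hnil, hsub, hpg, b, hb, hsup, hinf⟩ := h
  have hcompl : (zpowers b).IsComplement' (commutator G) := by
    refine isComplement'_of_disjoint_and_mul_eq_univ (disjoint_iff.mpr (by rwa [inf_comm])) ?_
    rw [← mul_normal, sup_comm, hsup, coe_top]
  let E := hcompl.QuotientMulEquiv
  have hE : ∀ x : zpowers b, E (QuotientGroup.mk (x : G)) = x := fun x =>
    E.symm.injective (by rw [MulEquiv.symm_apply_apply]; rfl)
  refine ⟨b, ((zpowers b).subtype.comp (E.toMonoidHom.comp (QuotientGroup.mk' _)) : G →* G),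
    ⟨hfin, hnil, hsub, hpg, hp, hq, hpq, hv, hb, ?_, ?_, ?_⟩⟩
  · exact congrArg Subtype.val (hE ⟨b, mem_zpowers b⟩)
  · exact fun g => (E (QuotientGroup.mk g)).2
  · intro g
    rw [← QuotientGroup.eq_one_iff g, ← E.map_eq_one_iff]
    exact (Subtype.ext_iff (a1 := E (QuotientGroup.mk g)) (a2 := 1)).symm

namespace IsSchmidtRetraction

variable {p q v : ℕ} {G : Type*} [Group G] {b : G} {e : Monoid.End G}

theorem map_of_mem_zpowers (h : IsSchmidtRetraction p q v b e) {y : G} (hy : y ∈ zpowers b) :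
    e y = y := by
  obtain ⟨k, rfl⟩ := hy
  rw [map_zpow, h.map_gen]

theorem mul_self (h : IsSchmidtRetraction p q v b e) : e * e = e :=
  DFunLike.ext _ _ fun g => h.map_of_mem_zpowers (h.map_mem g)

theorem mul_inv_mem (h : IsSchmidtRetraction p q v b e) (g : G) :
    g * (e g)⁻¹ ∈ commutator G := by
  rw [← h.map_eq_one_iff, map_mul, map_inv, h.map_of_mem_zpowers (h.map_mem g), mul_inv_cancel]

theorem exists_eq_mul_zpow (h : IsSchmidtRetraction p q v b e) (g : G) :
    ∃ u ∈ commutator G, ∃ k : ℤ, g = u * b ^ k := by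
  obtain ⟨k, hk⟩ := h.map_mem g
  exact ⟨_, h.mul_inv_mem g, k, by simp [hk]⟩

theorem pow_eq_one (h : IsSchmidtRetraction p q v b e) : b ^ q ^ v = 1 := by
  rw [← h.orderOf_eq, pow_orderOf_eq_one]

theorem ne_one (h : IsSchmidtRetraction p q v b e) : b ≠ 1 := by
  rw [Ne, ← orderOf_eq_one_iff, h.orderOf_eq]
  exact (Nat.one_lt_pow (by have := h.pos; lia) h.prime_right.one_lt).ne'

/-- An element of the commutator subgroup whose order divides `q ^ v` is trivial. -/
theorem eq_one_of_mem_of_pow (h : IsSchmidtRetraction p q v b e) {u : G}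
    (hu : u ∈ commutator G) (hu' : u ^ q ^ v = 1) : u = 1 := by
  obtain ⟨k, hk⟩ := h.isPGroup.exists_pow_eq_one_of_mem hu
  exact eq_one_of_pow_prime_pow_eq_one h.prime_left h.prime_right h.ne hk hu'

theorem normalClosure_eq_top (h : IsSchmidtRetraction p q v b e) : normalClosure {b} = ⊤ := by
  have := h.finite
  have : Fact p.Prime := ⟨h.prime_left⟩
  set M := normalClosure {b} with hM
  have hb : b ∈ M := subset_normalClosure rfl
  have hmk : ∀ g : G, ∃ u ∈ commutator G, (QuotientGroup.mk g : G ⧸ M) = QuotientGroup.mk u := by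
    intro g
    obtain ⟨u, hu, k, rfl⟩ := h.exists_eq_mul_zpow g
    refine ⟨u, hu, ?_⟩
    rw [QuotientGroup.mk_mul, (QuotientGroup.eq_one_iff (b ^ k)).mpr (zpow_mem hb k), mul_one]
  have hpg : IsPGroup p (G ⧸ M) := by
    intro z
    obtain ⟨g, rfl⟩ := QuotientGroup.mk_surjective z
    obtain ⟨u, hu, hgu⟩ := hmk g
    obtain ⟨k, hk⟩ := h.isPGroup.exists_pow_eq_one_of_mem hu
    exact ⟨k, by rw [hgu, ← QuotientGroup.mk_pow, hk, QuotientGroup.mk_one]⟩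
  have hperf : commutator (G ⧸ M) = ⊤ := by
    rw [eq_top_iff]
    intro z _
    obtain ⟨g, rfl⟩ := QuotientGroup.mk_surjective z
    obtain ⟨u, hu, hgu⟩ := hmk g
    have := mem_map_of_mem (QuotientGroup.mk' M) hu
    rw [map_commutator_eq, MonoidHom.range_eq_top.mpr (QuotientGroup.mk'_surjective M)] at this
    rw [hgu]
    exact this
  have := hpg.isNilpotent
  by_contra hne
  have : Nontrivial (G ⧸ M) := QuotientGroup.nontrivial_iff.mpr hne
  exact (Group.IsSolvable.commutator_lt_top_of_nontrivial (G ⧸ M)).ne hperf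

/-- A subgroup containing all conjugates of `b` is everything. -/
theorem eq_top_of_forall_conj_mem (h : IsSchmidtRetraction p q v b e) {S : Subgroup G}
    (hS : ∀ g, g * b * g⁻¹ ∈ S) : S = ⊤ := by
  rw [eq_top_iff, ← h.normalClosure_eq_top, normalClosure, closure_le]
  intro z hz
  obtain ⟨a, ha, hz⟩ := Group.mem_conjugatesOfSet_iff.mp hz
  obtain ⟨c, rfl⟩ := isConj_iff.mp hz
  rw [Set.mem_singleton_iff.mp ha]
  exact hS c

theorem end_ext (h : IsSchmidtRetraction p q v b e) {f g : Monoid.End G}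
    (hfg : ∀ u ∈ commutator G, f (u * b * u⁻¹) = g (u * b * u⁻¹)) : f = g := by
  have : MonoidHom.eqLocus f.toHom g.toHom = ⊤ := by
    refine h.eq_top_of_forall_conj_mem fun y => ?_
    obtain ⟨u, hu, k, rfl⟩ := h.exists_eq_mul_zpow y
    have : u * b ^ k * b * (u * b ^ k)⁻¹ = u * b * u⁻¹ := by group
    rw [this]
    exact hfg u hu
  exact DFunLike.ext _ _ fun y => (this ▸ mem_top y : y ∈ MonoidHom.eqLocus f.toHom g.toHom)

theorem not_comm (h : IsSchmidtRetraction p q v b e) : ¬ ∀ x y : G, x * y = y * x := fun hc =>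
  h.not_nilpotent (@CommGroup.isNilpotent G { ‹Group G› with mul_comm := hc })

theorem gen_notMem_center (h : IsSchmidtRetraction p q v b e) : b ∉ center G := by
  intro hb
  have : center G = ⊤ := h.eq_top_of_forall_conj_mem fun g => by
    rwa [mem_center_iff.mp hb g, mul_inv_cancel_right]
  exact h.not_comm fun x y => mem_center_iff.mp (this ▸ mem_top y) x

theorem ne_end_one (h : IsSchmidtRetraction p q v b e) : e ≠ 1 := by
  rintro rfl
  refine h.not_comm fun x y => ?_
  obtain ⟨i, hi⟩ : x ∈ zpowers b := h.map_mem x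
  obtain ⟨j, hj⟩ : y ∈ zpowers b := h.map_mem y
  simp only at hi hj
  rw [← hi, ← hj, ← zpow_add, ← zpow_add, add_comm]

theorem commute_of_ne_top (h : IsSchmidtRetraction p q v b e) {K : Subgroup G} (hK : K ≠ ⊤)
    {x y : G} (hxK : x ∈ K) (hyK : y ∈ K) {m n : ℕ} (hx : x ^ p ^ m = 1) (hy : y ^ q ^ n = 1) :
    Commute x y := by
  have := h.finite
  have := (h.nilpotent_of_ne_top K hK).commute_of_pow_prime_pow_eq_one h.prime_left h.prime_right
    h.ne (x := ⟨x, hxK⟩) (y := ⟨y, hyK⟩) (Subtype.ext hx) (Subtype.ext hy)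
  exact congrArg Subtype.val this

/-- Every endomorphism that is not invertible factors through the retraction. -/
theorem mul_eq_of_not_isUnit (h : IsSchmidtRetraction p q v b e) {f : Monoid.End G}
    (hf : ¬ IsUnit f) : f * e = f := by
  have := h.finite
  let F : G →* G := f.toHom
  have hrange : F.range ≠ ⊤ := by
    intro htop
    have hbij : Function.Bijective F :=
      Finite.injective_iff_bijective.mp
        (Finite.injective_iff_surjective.mpr (MonoidHom.range_eq_top.mp htop))
    let E := MulEquiv.ofBijective F hbij
    refine hf ⟨⟨f, (E.symm : G →* G), ?_, ?_⟩, rfl⟩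
    · exact DFunLike.ext _ _ fun x => E.apply_symm_apply x
    · exact DFunLike.ext _ _ fun x => E.symm_apply_apply x
  have hcomm : ∀ u ∈ commutator G, Commute (f u) (f b) := by
    intro u hu
    obtain ⟨k, hk⟩ := h.isPGroup.exists_pow_eq_one_of_mem hu
    refine h.commute_of_ne_top hrange (m := k) (n := v) ⟨u, rfl⟩ ⟨b, rfl⟩ ?_ ?_
    · rw [← map_pow, hk, map_one]
    · rw [← map_pow, h.pow_eq_one, map_one]
  refine h.end_ext fun u hu => ?_
  have heu : e u = 1 := (h.map_eq_one_iff u).mpr hu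
  simp only [Monoid.End.coe_mul, Function.comp_apply, map_mul, map_inv, heu, h.map_gen,
    (hcomm u hu).eq]
  simp

/-- The `q`-th power of `b` is central. -/
theorem gen_pow_mem_center (h : IsSchmidtRetraction p q v b e) : b ^ q ∈ center G := by
  let F : G →* G := e.toHom
  have hK : (zpowers (b ^ q)).comap F ≠ ⊤ := by
    intro htop
    have hb : e b ∈ zpowers (b ^ q) := (htop ▸ mem_top b : b ∈ (zpowers (b ^ q)).comap F)
    rw [h.map_gen] at hb
    have hd := orderOf_dvd_of_mem_zpowers hb
    have hqv : q ∣ orderOf b := h.orderOf_eq ▸ dvd_pow_self q (by have := h.pos; lia)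
    rw [orderOf_pow_of_dvd h.prime_right.ne_zero hqv] at hd
    have hpos : 0 < orderOf b := h.orderOf_eq ▸ pow_pos h.prime_right.pos v
    have := Nat.le_of_dvd (Nat.div_pos (Nat.le_of_dvd hpos hqv) h.prime_right.pos) hd
    exact absurd this (not_le.mpr (Nat.div_lt_self hpos h.prime_right.one_lt))
  rw [mem_center_iff]
  intro g
  obtain ⟨u, hu, k, rfl⟩ := h.exists_eq_mul_zpow g
  obtain ⟨m, hm⟩ := h.isPGroup.exists_pow_eq_one_of_mem hu
  have h1 : Commute u (b ^ q) := by
    refine h.commute_of_ne_top hK (m := m) (n := v) ?_ ?_ hm ?_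
    · rw [mem_comap, show F u = 1 from (h.map_eq_one_iff u).mpr hu]
      exact one_mem _
    · rw [mem_comap, map_pow, show F b = b from h.map_gen]
      exact mem_zpowers _
    · rw [← pow_mul, mul_comm, pow_mul, h.pow_eq_one, one_pow]
  exact h1.mul_left ((Commute.refl b).zpow_left k |>.pow_right q)

/-- A proper `b`-invariant subgroup of the commutator subgroup is centralized by `b`. -/
theorem commute_of_invariant (h : IsSchmidtRetraction p q v b e) {R : Subgroup G}
    (hR : R < commutator G) (hb : ∀ r ∈ R, b * r * b⁻¹ ∈ R) {r : G} (hr : r ∈ R) :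
    Commute r b := by
  have := h.finite
  have hconj : ∀ y ∈ zpowers b, ∀ r ∈ R, y * r * y⁻¹ ∈ R := by
    intro y hy
    obtain ⟨n, rfl⟩ := mem_powers_iff_mem_zpowers.mpr hy
    induction n with
    | zero => simp
    | succ n ih =>
      intro r hr
      have := hb _ (ih ((mem_powers_iff_mem_zpowers).mp ⟨n, rfl⟩) r hr)
      convert this using 1
      simp only [pow_succ']
      group
  let K : Subgroup G :=
    { carrier := {g | g * (e g)⁻¹ ∈ R}
      one_mem' := by simp
      mul_mem' := by
        intro g k hg hk
        have := mul_mem hg (hconj (e g) (h.map_mem g) _ hk)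
        change g * k * (e (g * k))⁻¹ ∈ R
        convert this using 1
        rw [map_mul]
        group
      inv_mem' := by
        intro g hg
        have := hconj (e g)⁻¹ (inv_mem (h.map_mem g)) _ (inv_mem hg)
        change g⁻¹ * (e g⁻¹)⁻¹ ∈ R
        convert this using 1
        rw [map_inv]
        group }
  have hK : K ≠ ⊤ := by
    intro htop
    obtain ⟨u, hu, huR⟩ := SetLike.exists_of_lt hR
    have : u * (e u)⁻¹ ∈ R := (htop ▸ mem_top u : u ∈ K)
    rw [(h.map_eq_one_iff u).mpr hu, inv_one, mul_one] at this
    exact huR this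
  obtain ⟨m, hm⟩ := h.isPGroup.exists_pow_eq_one_of_mem (hR.le hr)
  refine h.commute_of_ne_top hK (m := m) (n := v) ?_ ?_ hm h.pow_eq_one
  · change r * (e r)⁻¹ ∈ R
    rwa [(h.map_eq_one_iff r).mpr (hR.le hr), inv_one, mul_one]
  · change b * (e b)⁻¹ ∈ R
    rw [h.map_gen, mul_inv_cancel]
    exact one_mem R

end IsSchmidtRetraction

section Irreducible

variable {V : Type*} [AddCommGroup V] {b : AddMonoid.End V}

theorem AddMonoid.End.commute_of_irreducible
    (hb : ∀ W : AddSubgroup V, (∀ w ∈ W, b w ∈ W) → W = ⊥ ∨ W = ⊤)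
    {α β : AddMonoid.End V} (hα : Commute α b) (hβ : Commute β b) : Commute α β := by
  have hS : ∀ γ : AddMonoid.End V, Commute γ b → ∀ s ∈ Subring.closure {b}, Commute γ s := by
    intro γ hγ s hs
    have : Subring.closure {b} ≤ Subring.centralizer {γ} := by
      rw [Subring.closure_le, Set.singleton_subset_iff]
      exact Subring.mem_centralizer_iff.mpr fun y hy => by rw [Set.mem_singleton_iff.mp hy, hγ.eq]
    exact Subring.mem_centralizer_iff.mp (this hs) γ rfl
  by_cases hV : ∀ w : V, w = 0
  · exact DFunLike.ext _ _ fun w => (hV _).trans (hV _).symm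
  push Not at hV
  obtain ⟨w, hw⟩ := hV
  let W : AddSubgroup V :=
    { carrier := {u | ∃ s ∈ Subring.closure {b}, s w = u}
      zero_mem' := ⟨0, zero_mem _, rfl⟩
      add_mem' := by
        rintro _ _ ⟨s, hs, rfl⟩ ⟨t, ht, rfl⟩
        exact ⟨s + t, add_mem hs ht, rfl⟩
      neg_mem' := by
        rintro _ ⟨s, hs, rfl⟩
        exact ⟨-s, neg_mem hs, rfl⟩ }
  have hW : W = ⊤ := by
    refine (hb W ?_).resolve_left fun h => hw ?_
    · rintro _ ⟨s, hs, rfl⟩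
      exact ⟨b * s, mul_mem (Subring.subset_closure rfl) hs, rfl⟩
    · exact (AddSubgroup.mem_bot).mp (h ▸ (⟨1, one_mem _, rfl⟩ : w ∈ W))
  have hαS : α ∈ Subring.closure {b} := by
    obtain ⟨s, hs, hsw⟩ : α w ∈ W := hW ▸ AddSubgroup.mem_top _
    convert hs
    refine DFunLike.ext _ _ fun u => ?_
    obtain ⟨t, ht, rfl⟩ : u ∈ W := hW ▸ AddSubgroup.mem_top _
    have h1 : α (t w) = t (α w) := DFunLike.congr_fun (hS α hα t ht).eq w
    have h2 : t (s w) = s (t w) :=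
      DFunLike.congr_fun (hS t (hS b (Commute.refl b) t ht).symm s hs).eq w
    rw [h1, ← hsw, h2]
  exact (hS β hβ α hαS).symm

theorem AddMonoid.End.exists_eq_pow_of_irreducible
    (hb : ∀ W : AddSubgroup V, (∀ w ∈ W, b w ∈ W) → W = ⊥ ∨ W = ⊤) {q : ℕ} (hq : q.Prime)
    (hbq : b ^ q = 1) (hb1 : b ≠ 1) {α : AddMonoid.End V} (hα : Commute α b) (hαq : α ^ q = 1) :
    ∃ i, α = b ^ i := by
  have : Fact q.Prime := ⟨hq⟩
  have : NeZero q := ⟨hq.ne_zero⟩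
  have hmem : ∀ {γ : AddMonoid.End V}, γ ∈ Subring.centralizer {b} ↔ Commute γ b := by
    intro γ
    simp [Subring.mem_centralizer_iff, commute_iff_eq, eq_comm]
  let F := Subring.centralizer ({b} : Set (AddMonoid.End V))
  let : CommRing F :=
    { (inferInstance : Ring F) with
      mul_comm := fun x y =>
        Subtype.ext (commute_of_irreducible hb (hmem.mp x.2) (hmem.mp y.2)).eq }
  have : Nontrivial F := ⟨⟨⟨b, hmem.mpr (Commute.refl b)⟩, 1, fun h => hb1 (congrArg Subtype.val h)⟩⟩
  have : NoZeroDivisors F := by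
    refine ⟨fun {x y} hxy => ?_⟩
    have hxy' : ∀ w, x.1 (y.1 w) = 0 := fun w => DFunLike.congr_fun (congrArg Subtype.val hxy) w
    have hker : ∀ w ∈ AddMonoidHom.ker x.1, b w ∈ AddMonoidHom.ker x.1 := fun w hw => by
      have h1 : x.1 (b w) = b (x.1 w) := DFunLike.congr_fun (hmem.mp x.2).eq w
      change x.1 (b w) = 0
      rw [h1, show x.1 w = 0 from hw, map_zero]
    rcases hb (AddMonoidHom.ker x.1) hker with h | h
    · right
      refine Subtype.ext (DFunLike.ext _ _ fun w => ?_)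
      exact (AddSubgroup.mem_bot).mp (h ▸ (hxy' w : y.1 w ∈ AddMonoidHom.ker x.1))
    · left
      exact Subtype.ext (DFunLike.ext _ _ fun w =>
        (h ▸ AddSubgroup.mem_top w : w ∈ AddMonoidHom.ker x.1))
  have : IsDomain F := NoZeroDivisors.to_isDomain F
  let B : F := ⟨b, hmem.mpr (Commute.refl b)⟩
  have hB : orderOf B = q :=
    orderOf_eq_prime (Subtype.ext hbq) fun h => hb1 (congrArg Subtype.val h)
  have hprim : IsPrimitiveRoot B q := hB ▸ IsPrimitiveRoot.orderOf B
  obtain ⟨i, -, hi⟩ := hprim.eq_pow_of_pow_eq_one (ξ := ⟨α, hmem.mpr hα⟩) (Subtype.ext hαq)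
  exact ⟨i, (congrArg Subtype.val hi).symm⟩

end Irreducible

/-- Conjugation, as a homomorphism to the endomorphism monoid. -/
def innerEnd (G : Type*) [Group G] : G →* Monoid.End G where
  toFun g := ((MulAut.conj g : G ≃* G) : G →* G)
  map_one' := DFunLike.ext _ _ fun x => DFunLike.congr_fun (map_one MulAut.conj) x
  map_mul' g k := DFunLike.ext _ _ fun x => DFunLike.congr_fun (map_mul MulAut.conj g k) x

@[simp]
theorem innerEnd_apply {G : Type*} [Group G] (g x : G) : innerEnd G g x = g * x * g⁻¹ := rfl

theorem innerEnd_eq_one_iff {G : Type*} [Group G] {g : G} :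
    innerEnd G g = 1 ↔ g ∈ center G := by
  rw [mem_center_iff, DFunLike.ext_iff]
  exact forall_congr' fun x => by
    rw [innerEnd_apply, Monoid.End.coe_one, id, mul_inv_eq_iff_eq_mul, eq_comm]

theorem mul_innerEnd {G : Type*} [Group G] (f : Monoid.End G) (g : G) :
    f * innerEnd G g = innerEnd G (f g) * f :=
  DFunLike.ext _ _ fun x => by simp

namespace IsSchmidtRetraction

variable {p q v : ℕ} {G : Type*} [Group G] {b : G} {e : Monoid.End G}

/-- The centralizer of `b` in the commutator subgroup. -/
def fixedSubgroup (b : G) : Subgroup (commutator G) :=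
  (centralizer {b}).subgroupOf (commutator G)

theorem mem_fixedSubgroup {x : commutator G} : x ∈ fixedSubgroup b ↔ Commute (x : G) b := by
  rw [fixedSubgroup, mem_subgroupOf, mem_centralizer_singleton_iff]
  exact Iff.rfl

theorem fixedSubgroup_ne_top (h : IsSchmidtRetraction p q v b e) :
    fixedSubgroup b ≠ (⊤ : Subgroup (commutator G)) := by
  intro htop
  refine h.gen_notMem_center (mem_center_iff.mpr fun g => ?_)
  obtain ⟨u, hu, k, rfl⟩ := h.exists_eq_mul_zpow g
  have : Commute u b := mem_fixedSubgroup.mp (htop ▸ mem_top (⟨u, hu⟩ : commutator G))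
  exact this.mul_left ((Commute.refl b).zpow_left k)

theorem le_fixedSubgroup (h : IsSchmidtRetraction p q v b e) {R : Subgroup (commutator G)}
    (hR : R ≠ ⊤)
    (hb : ∀ r ∈ R, MulAut.conjNormal b r ∈ R) : R ≤ fixedSubgroup b := by
  intro r hr
  rw [mem_fixedSubgroup]
  refine h.commute_of_invariant (R := R.map (commutator G).subtype) ?_ ?_ ⟨r, hr, rfl⟩
  · refine lt_of_le_of_ne (map_subtype_le R) fun heq => hR ?_
    rw [eq_top_iff]
    intro x _
    obtain ⟨y, hy, hyx⟩ : (x : G) ∈ R.map (commutator G).subtype := by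
      rw [heq]; exact x.2
    rwa [← Subtype.ext (a1 := y) hyx]
  · rintro _ ⟨s, hs, rfl⟩
    exact ⟨_, hb s hs, MulAut.conjNormal_apply b s⟩

theorem commutator_le_fixedSubgroup (h : IsSchmidtRetraction p q v b e) :
    _root_.commutator (commutator G) ≤ fixedSubgroup b := by
  have := h.finite
  have : Fact p.Prime := ⟨h.prime_left⟩
  have := h.isPGroup.isNilpotent
  refine h.le_fixedSubgroup ?_ fun r hr => ?_
  · have : Nontrivial (commutator G) := by
      by_contra hn
      rw [not_nontrivial_iff_subsingleton] at hn
      exact h.fixedSubgroup_ne_top (Subsingleton.elim _ _)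
    exact (Group.IsSolvable.commutator_lt_top_of_nontrivial (commutator G)).ne
  · have hc : (_root_.commutator (commutator G)).Characteristic := inferInstance
    exact (characteristic_iff_map_le.mp hc (MulAut.conjNormal b)) ⟨r, hr, rfl⟩

theorem normal_fixedSubgroup (h : IsSchmidtRetraction p q v b e) :
    (fixedSubgroup b : Subgroup (commutator G)).Normal :=
  Normal.of_commutator_le _ h.commutator_le_fixedSubgroup

/-- The endomorphisms fixing `b`. -/
def stab (b : G) : Submonoid (Monoid.End G) where
  carrier := {f | f b = b}
  one_mem' := rfl
  mul_mem' {f g} hf hg := by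
    change f (g b) = b
    rw [show g b = b from hg, show f b = b from hf]

theorem innerEnd_mem_stab (b : G) : innerEnd G b ∈ stab b := by
  change b * b * b⁻¹ = b
  rw [mul_inv_cancel_right]

theorem map_mem_commutator (f : Monoid.End G) {x : G} (hx : x ∈ commutator G) :
    f x ∈ commutator G :=
  have : (commutator G).map f.toHom ≤ commutator G := by
    rw [map_commutator_eq]
    exact commutator_mono le_top le_top
  this ⟨x, hx, rfl⟩

/-- The restriction of an endomorphism to the commutator subgroup. -/
def restrictCommutator (f : Monoid.End G) : commutator G →* commutator G :=
  (f.toHom.comp (commutator G).subtype).codRestrict _ fun x => map_mem_commutator f x.2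

theorem fixedSubgroup_le_comap {f : Monoid.End G} (hf : f ∈ stab b) :
    fixedSubgroup b ≤ (fixedSubgroup b).comap (restrictCommutator f) := by
  intro x hx
  rw [mem_comap, mem_fixedSubgroup]
  have := (mem_fixedSubgroup.mp hx).map f
  rwa [show f b = b from hf] at this

/-- The endomorphisms fixing `b` act faithfully on an abelian group on which conjugation by `b`
acts irreducibly. -/
theorem exists_faithful_irreducible.{u} {G : Type u} [Group G] {b : G} {e : Monoid.End G}
    (h : IsSchmidtRetraction p q v b e) :
    ∃ (V : Type u) (_ : AddCommGroup V) (ρ : stab b →* AddMonoid.End V), Function.Injective ρ ∧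
      ∀ W : AddSubgroup V, (∀ w ∈ W, ρ ⟨innerEnd G b, innerEnd_mem_stab b⟩ w ∈ W) →
        W = ⊥ ∨ W = ⊤ := by
  let D : Subgroup (commutator G) := fixedSubgroup b
  have : D.Normal := h.normal_fixedSubgroup
  have := Normal.quotient_commutative_iff_commutator_le.mpr h.commutator_le_fixedSubgroup
  let : CommGroup (commutator G ⧸ D) :=
    { (inferInstance : Group (commutator G ⧸ D)) with mul_comm := this.is_comm.comm }
  let ρ : stab b →* AddMonoid.End (Additive (commutator G ⧸ D)) :=
    { toFun := fun f => MonoidHom.toAdditive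
        (QuotientGroup.map D D (restrictCommutator f.1) (fixedSubgroup_le_comap f.2))
      map_one' := DFunLike.ext _ _ fun w => by
        obtain ⟨x, rfl⟩ := QuotientGroup.mk_surjective w.toMul
        rfl
      map_mul' := fun f g => DFunLike.ext _ _ fun w => by
        induction w with | ofMul w => ?_
        obtain ⟨x, rfl⟩ := QuotientGroup.mk_surjective w
        rfl }
  have hρ : ∀ (f : stab b) (x : commutator G),
      ρ f (Additive.ofMul (QuotientGroup.mk x)) =
        Additive.ofMul (QuotientGroup.mk (restrictCommutator f.1 x)) := fun _ _ => rfl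
  refine ⟨Additive (commutator G ⧸ D), inferInstance, ρ, fun f g hfg => ?_, fun W hW => ?_⟩
  · refine Subtype.ext (h.end_ext fun u hu => ?_)
    have h1 := DFunLike.congr_fun hfg (Additive.ofMul (QuotientGroup.mk ⟨u, hu⟩))
    rw [hρ, hρ] at h1
    have h2 : Commute ((f.1 u)⁻¹ * g.1 u) b :=
      mem_fixedSubgroup.mp (QuotientGroup.eq.mp (Additive.ofMul.injective h1))
    have hf : f.1 b = b := f.2
    have hg : g.1 b = b := g.2
    have h3 : f.1 u * ((f.1 u)⁻¹ * g.1 u * b) * (g.1 u)⁻¹ =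
        f.1 u * (b * ((f.1 u)⁻¹ * g.1 u)) * (g.1 u)⁻¹ := by rw [h2.eq]
    rw [map_mul, map_mul, map_mul, map_mul, map_inv, map_inv, hf, hg]
    calc _ = f.1 u * (b * ((f.1 u)⁻¹ * g.1 u)) * (g.1 u)⁻¹ := by group
      _ = _ := by rw [← h3]; group
  · let R : Subgroup (commutator G) :=
      { carrier := {x | Additive.ofMul (QuotientGroup.mk x) ∈ W}
        one_mem' := W.zero_mem
        mul_mem' := fun hx hy => W.add_mem hx hy
        inv_mem' := fun hx => W.neg_mem hx }
    by_cases hR : R = ⊤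
    · right
      rw [eq_top_iff]
      intro w _
      obtain ⟨x, hx⟩ := QuotientGroup.mk_surjective w.toMul
      have : x ∈ R := hR ▸ mem_top x
      have : Additive.ofMul (QuotientGroup.mk x) ∈ W := this
      rwa [hx] at this
    · left
      have hle : R ≤ D := h.le_fixedSubgroup hR fun r hr => by
        have := hW _ hr
        rw [hρ] at this
        exact this
      rw [eq_bot_iff]
      intro w hw
      obtain ⟨x, hx⟩ := QuotientGroup.mk_surjective w.toMul
      have : x ∈ R := by
        change Additive.ofMul (QuotientGroup.mk x) ∈ W
        rwa [hx]
      have := (QuotientGroup.eq_one_iff x).mpr (hle this)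
      rw [hx] at this
      exact AddSubgroup.mem_bot.mpr (Additive.toMul.injective this)

theorem commute_of_mem_stab (h : IsSchmidtRetraction p q v b e) {f g : Monoid.End G}
    (hf : f ∈ stab b) (hg : g ∈ stab b) : Commute f g := by
  obtain ⟨V, _, ρ, hinj, hirr⟩ := h.exists_faithful_irreducible
  have hcomm : ∀ s : stab b, Commute s ⟨innerEnd G b, innerEnd_mem_stab b⟩ := fun s =>
    Subtype.ext <| by
      change s.1 * innerEnd G b = innerEnd G b * s.1
      rw [mul_innerEnd, show s.1 b = b from s.2]
  have := AddMonoid.End.commute_of_irreducible hirr ((hcomm ⟨f, hf⟩).map ρ)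
    ((hcomm ⟨g, hg⟩).map ρ)
  rw [commute_iff_eq, ← map_mul, ← map_mul] at this
  exact congrArg Subtype.val (hinj this)

theorem innerEnd_pow_eq_one (h : IsSchmidtRetraction p q v b e) : innerEnd G b ^ q = 1 := by
  rw [← map_pow, innerEnd_eq_one_iff]
  exact h.gen_pow_mem_center

theorem exists_eq_innerEnd_pow (h : IsSchmidtRetraction p q v b e) {f : Monoid.End G}
    (hf : f ∈ stab b) (hfq : f ^ q = 1) : ∃ i, f = innerEnd G b ^ i := by
  obtain ⟨V, _, ρ, hinj, hirr⟩ := h.exists_faithful_irreducible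
  let β : stab b := ⟨innerEnd G b, innerEnd_mem_stab b⟩
  have hcomm : Commute (⟨f, hf⟩ : stab b) β := Subtype.ext <| by
    change f * innerEnd G b = innerEnd G b * f
    rw [mul_innerEnd, show f b = b from hf]
  have hβ : β ≠ 1 := fun heq =>
    h.gen_notMem_center (innerEnd_eq_one_iff.mp (congrArg Subtype.val heq))
  obtain ⟨i, hi⟩ := AddMonoid.End.exists_eq_pow_of_irreducible hirr h.prime_right
    (by rw [← map_pow, show β ^ q = 1 from Subtype.ext h.innerEnd_pow_eq_one, map_one])
    (fun heq => hβ (hinj (heq.trans (map_one ρ).symm)))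
    (hcomm.map ρ)
    (by rw [← map_pow, show (⟨f, hf⟩ : stab b) ^ q = 1 from Subtype.ext hfq, map_one])
  rw [← map_pow] at hi
  exact ⟨i, congrArg Subtype.val (hinj hi)⟩

/-- An element of `q`-power order congruent to `b` modulo the commutator subgroup is conjugate
to `b`. -/
theorem exists_conj_eq (h : IsSchmidtRetraction p q v b e) {y : G} (hy : y ^ q ^ v = 1)
    (hey : e y = b) : ∃ g, g * b * g⁻¹ = y := by
  have := h.finite
  have : Fact q.Prime := ⟨h.prime_right⟩
  have : Fact p.Prime := ⟨h.prime_left⟩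
  have horder : orderOf y = q ^ v := by
    refine Nat.dvd_antisymm (orderOf_dvd_of_pow_eq_one hy) ?_
    rw [← h.orderOf_eq, ← hey]
    exact orderOf_map_dvd e.toHom y
  obtain ⟨a, ha⟩ := IsPGroup.iff_card.mp h.isPGroup
  have hcard : Nat.card G = p ^ a * q ^ v := by
    have hker : commutator G = e.toHom.ker := by
      ext x
      exact (h.map_eq_one_iff x).symm
    have hrange : e.toHom.range = zpowers b := by
      ext x
      exact ⟨fun ⟨y, hy⟩ => hy ▸ h.map_mem y, fun hx => ⟨x, h.map_of_mem_zpowers hx⟩⟩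
    rw [← (commutator G).card_mul_index, ha, hker, index_ker, hrange, Nat.card_zpowers,
      h.orderOf_eq]
  have hfact : (Nat.card G).factorization q = v := by
    rw [hcard, Nat.factorization_mul (pow_ne_zero _ h.prime_left.ne_zero)
      (pow_ne_zero _ h.prime_right.ne_zero), h.prime_left.factorization_pow,
      h.prime_right.factorization_pow]
    simp [h.ne]
  obtain ⟨g, hg⟩ := MulAction.exists_smul_eq G
    (Sylow.ofCard (zpowers b) (by rw [Nat.card_zpowers, h.orderOf_eq, hfact]))
    (Sylow.ofCard (zpowers y) (by rw [Nat.card_zpowers, horder, hfact]))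
  have hmem : MulAut.conj g • b ∈ zpowers y := by
    have h1 : MulAut.conj g • zpowers b = zpowers y := congrArg Sylow.toSubgroup hg
    rw [← h1]
    exact smul_mem_pointwise_smul b _ _ (mem_zpowers b)
  obtain ⟨k, hk⟩ := hmem
  have hk' : y ^ k = g * b * g⁻¹ := hk
  have hbk : b ^ k = b := by
    have h2 := congrArg e hk'
    obtain ⟨i, hi⟩ := h.map_mem g
    simp only at hi
    rw [map_zpow, hey, map_mul, map_mul, map_inv, h.map_gen, ← hi] at h2
    rw [h2]
    group
  refine ⟨g, hk'.symm.trans ?_⟩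
  have h3 : b ^ (k - 1) = 1 := by rw [zpow_sub, hbk, zpow_one, mul_inv_cancel]
  have h4 : y ^ (k - 1) = 1 := by
    rwa [← orderOf_dvd_iff_zpow_eq_one, horder, ← h.orderOf_eq, orderOf_dvd_iff_zpow_eq_one]
  rwa [zpow_sub, zpow_one, mul_inv_eq_one] at h4

/-- Endomorphisms acting trivially modulo the commutator subgroup commute up to inner ones. -/
theorem exists_mul_eq_innerEnd_mul (h : IsSchmidtRetraction p q v b e) {f g : Monoid.End G}
    (hf : e * f = e) (hg : e * g = e) : ∃ y, f * g = innerEnd G y * (g * f) := by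
  have decomp : ∀ f : Monoid.End G, e * f = e → ∃ y, ∃ s ∈ stab b, f = innerEnd G y * s := by
    intro f hf
    obtain ⟨y, hy⟩ := h.exists_conj_eq (y := f b) (by rw [← map_pow, h.pow_eq_one, map_one])
      ((DFunLike.congr_fun hf b).trans h.map_gen)
    refine ⟨y, innerEnd G y⁻¹ * f, ?_, ?_⟩
    · change y⁻¹ * f b * y⁻¹⁻¹ = b
      rw [← hy]
      group
    · rw [← mul_assoc, ← map_mul, mul_inv_cancel, map_one, one_mul]
  obtain ⟨y, s, hs, rfl⟩ := decomp f hf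
  obtain ⟨z, t, ht, rfl⟩ := decomp g hg
  refine ⟨y * s z * (z * t y)⁻¹, ?_⟩
  have h1 : ∀ (y z : G) (s t : Monoid.End G), innerEnd G y * s * (innerEnd G z * t) =
      innerEnd G (y * s z) * (s * t) := fun y z s t => by
    rw [map_mul, mul_assoc, ← mul_assoc s, mul_innerEnd, mul_assoc, mul_assoc]
  rw [h1, h1, (h.commute_of_mem_stab hs ht).eq,
    ← mul_assoc (innerEnd G (y * s z * (z * t y)⁻¹)), ← map_mul, inv_mul_cancel_right]

end IsSchmidtRetraction

section Character

theorem exists_character_orderOf_eq {A : Type*} [CommGroup A] (a : A) (ha : IsOfFinOrder a) :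
    ∃ χ : A →* Multiplicative (AddCircle (1 : ℚ)), orderOf (χ a) = orderOf a := by
  let t : AddCircle (1 : ℚ) := ((1 / orderOf a : ℚ) : AddCircle (1 : ℚ))
  have ht : orderOf (Multiplicative.ofAdd t) = orderOf a := by
    rw [orderOf_ofAdd_eq_addOrderOf]
    exact AddCircle.addOrderOf_period_div (p := (1 : ℚ)) ha.orderOf_pos
  have hgen : ∀ x : zpowers a, x ∈ zpowers (⟨a, mem_zpowers a⟩ : zpowers a) := by
    rintro ⟨_, k, rfl⟩
    exact ⟨k, rfl⟩
  let ψ : zpowers a →* Multiplicative (AddCircle (1 : ℚ)) :=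
    monoidHomOfForallMemZpowers hgen (g' := Multiplicative.ofAdd t)
      (by rw [ht, orderOf_mk])
  have hψ : ψ ⟨a, mem_zpowers a⟩ = Multiplicative.ofAdd t :=
    monoidHomOfForallMemZpowers_apply_gen hgen _
  obtain ⟨χ, hχ⟩ := (Module.Baer.of_divisible (AddCircle (1 : ℚ))).extension_property_addMonoidHom
    (MonoidHom.toAdditive (zpowers a).subtype) Subtype.val_injective
    (AddMonoidHom.toMultiplicativeRight.symm ψ)
  refine ⟨AddMonoidHom.toMultiplicativeRight χ, ?_⟩
  rw [← ht, ← hψ]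
  congr 1
  exact DFunLike.congr_fun hχ (Additive.ofMul ⟨a, mem_zpowers a⟩)

theorem exists_forall_character_mem_zpowers {K : Type*} [Group K] {n : ℕ} (hn : 0 < n)
    (hK : ∀ k : K, k ^ n = 1) (χ : K →* Multiplicative (AddCircle (1 : ℚ))) :
    ∃ k₀, ∀ k, χ k ∈ zpowers (χ k₀) := by
  let t : Multiplicative (AddCircle (1 : ℚ)) :=
    Multiplicative.ofAdd ((1 / n : ℚ) : AddCircle (1 : ℚ))
  have hle : χ.range ≤ zpowers t := by
    rintro _ ⟨k, rfl⟩
    have h1 : n • (χ k).toAdd = 0 := by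
      rw [← toAdd_pow, ← map_pow, hK, map_one, toAdd_one]
    obtain ⟨m, -, hm⟩ := (AddCircle.nsmul_eq_zero_iff hn).mp h1
    refine ⟨m, ?_⟩
    apply Multiplicative.toAdd.injective
    rw [← hm]
    simp only [t, zpow_natCast, toAdd_pow, toAdd_ofAdd, ← AddCircle.coe_nsmul]
    congr 1
    simp [div_eq_mul_inv]
  have : IsCyclic χ.range := isCyclic_of_injective (inclusion hle) (inclusion_injective hle)
  obtain ⟨⟨_, k₀, rfl⟩, h⟩ := IsCyclic.exists_generator (α := χ.range)
  refine ⟨k₀, fun k => ?_⟩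
  obtain ⟨i, hi⟩ := h ⟨χ k, k, rfl⟩
  exact ⟨i, congrArg Subtype.val hi⟩

theorem exists_hom_of_character {K T : Type*} [Group K] [Group T] (χ : K →* T) {k₀ y : K}
    (hk : ∀ k, χ k ∈ zpowers (χ k₀)) (hy : orderOf y = orderOf (χ k₀)) :
    ∃ f : K →* K, f k₀ = y ∧ (∀ k, f k ∈ zpowers y) ∧ ∀ k, f k = 1 → χ k = 1 := by
  have hgen : ∀ x : χ.range, x ∈ zpowers (⟨χ k₀, k₀, rfl⟩ : χ.range) := by
    rintro ⟨_, k, rfl⟩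
    obtain ⟨i, hi⟩ := hk k
    exact ⟨i, Subtype.ext hi⟩
  have hdvd : orderOf y ∣ orderOf (⟨χ k₀, k₀, rfl⟩ : χ.range) := by
    rw [hy]
    exact (Subgroup.orderOf_coe (⟨χ k₀, k₀, rfl⟩ : χ.range)).dvd
  let θ := monoidHomOfForallMemZpowers hgen hdvd
  have hθ : θ ⟨χ k₀, k₀, rfl⟩ = y := monoidHomOfForallMemZpowers_apply_gen hgen hdvd
  have key : ∀ k (i : ℤ), χ k₀ ^ i = χ k → θ (χ.rangeRestrict k) = y ^ i := by
    intro k i hi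
    rw [← hθ, ← map_zpow]
    exact congrArg θ (Subtype.ext hi.symm)
  refine ⟨θ.comp χ.rangeRestrict, hθ, fun k => ?_, fun k h1 => ?_⟩
  · obtain ⟨i, hi⟩ := hk k
    exact ⟨i, (key k i hi).symm⟩
  · obtain ⟨i, hi⟩ := hk k
    have h2 : y ^ i = 1 := (key k i hi).symm.trans h1
    rw [← orderOf_dvd_iff_zpow_eq_one, hy, orderOf_dvd_iff_zpow_eq_one] at h2
    rw [← hi, ← h2]

theorem exists_end_commute_ne_one {K : Type*} [Group K] {n : ℕ} (hn : 0 < n)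
    (hK : ∀ k : K, k ^ n = 1) {u : K} (hu : u ∉ commutator K) :
    ∃ f : Monoid.End K, f u ≠ 1 ∧ ∀ k l, Commute (f k) (f l) := by
  have hfin : ∀ k : K, IsOfFinOrder k := fun k => isOfFinOrder_iff_pow_eq_one.mpr ⟨n, hn, hK k⟩
  have hu' : Abelianization.of u ≠ 1 := fun h => hu (by
    rw [← Abelianization.ker_of]; exact h)
  obtain ⟨χ, hχ⟩ := exists_character_orderOf_eq (Abelianization.of u)
    (Abelianization.of.isOfFinOrder (hfin u))
  let ψ := χ.comp Abelianization.of
  obtain ⟨k₀, hk₀⟩ := exists_forall_character_mem_zpowers hn hK ψ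
  have hdvd : orderOf (ψ k₀) ∣ orderOf k₀ := orderOf_map_dvd ψ k₀
  have hpos := (hfin k₀).orderOf_pos
  obtain ⟨f, -, hf, hf1⟩ := exists_hom_of_character ψ (y := k₀ ^ (orderOf k₀ / orderOf (ψ k₀))) hk₀
    (by
      rw [orderOf_pow_of_dvd (Nat.div_pos (Nat.le_of_dvd hpos hdvd)
        (Nat.pos_of_dvd_of_pos hdvd hpos)).ne' (Nat.div_dvd_of_dvd hdvd),
        Nat.div_div_self hdvd hpos.ne'])
  refine ⟨f, fun h => ?_, fun k l => ?_⟩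
  · have h1 : orderOf (χ (Abelianization.of u)) = 1 := orderOf_eq_one_iff.mpr (hf1 u h)
    rw [hχ, orderOf_eq_one_iff] at h1
    exact hu' h1
  · obtain ⟨i, hi⟩ := hf k
    obtain ⟨j, hj⟩ := hf l
    change Commute (f k) (f l)
    rw [← hi, ← hj]
    exact Commute.zpow_zpow_self _ _ _

end Character

open scoped commutatorElement

section Cyclic

theorem card_end_eq_orderOf {C : Type*} [Group C] {c : C} (hc : ∀ x, x ∈ zpowers c) :
    Nat.card (Monoid.End C) = orderOf c := by
  rw [orderOf_eq_card_of_forall_mem_zpowers hc]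
  refine Nat.card_congr (Equiv.ofBijective (fun f : Monoid.End C => f c) ⟨fun f g h => ?_, fun y => ?_⟩)
  · exact (MonoidHom.eq_iff_eq_on_generator hc f g).mpr h
  · have hdvd : orderOf y ∣ orderOf c := orderOf_dvd_of_mem_zpowers (hc y)
    exact ⟨(monoidHomOfForallMemZpowers hc hdvd : C →* C),
      monoidHomOfForallMemZpowers_apply_gen hc hdvd⟩

theorem end_mul_comm_of_cyclic {C : Type*} [Group C] {c : C} (hc : ∀ x, x ∈ zpowers c)
    (f g : Monoid.End C) : f * g = g * f := by
  refine (MonoidHom.eq_iff_eq_on_generator hc _ _).mpr ?_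
  change f (g c) = g (f c)
  obtain ⟨i, hi⟩ := hc (f c)
  obtain ⟨j, hj⟩ := hc (g c)
  simp only at hi hj
  rw [← hi, ← hj, map_zpow, map_zpow, ← hi, ← hj, ← zpow_mul, ← zpow_mul, mul_comm]

theorem exists_end_mul_eq_or_of_cyclic {C : Type*} [Group C] {c : C} (hc : ∀ x, x ∈ zpowers c)
    {q v : ℕ} (hq : q.Prime) (hcard : orderOf c = q ^ v) (f g : Monoid.End C) :
    ∃ t, f = t * g ∨ g = t * f := by
  have hpow : ∀ f : Monoid.End C, ∃ i : ℕ, f c = c ^ i := fun f => by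
    have hfin : IsOfFinOrder c := orderOf_pos_iff.mp (hcard ▸ pow_pos hq.pos v)
    obtain ⟨i, hi⟩ := hfin.mem_powers_iff_mem_zpowers.mpr (hc (f c))
    exact ⟨i, hi.symm⟩
  have key : ∀ (f g : Monoid.End C) (i j : ℕ), f c = c ^ i → g c = c ^ j →
      i.gcd (q ^ v) ∣ j.gcd (q ^ v) → ∃ t, g = t * f := by
    intro f g i j hf hg hdvd
    obtain ⟨s, hs⟩ := hdvd.trans (Nat.gcd_dvd_left j _)
    have hdvd' : orderOf (c ^ (i.gcdA (q ^ v) * s)) ∣ orderOf c :=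
      orderOf_dvd_of_mem_zpowers (hc _)
    let t : Monoid.End C := (monoidHomOfForallMemZpowers hc hdvd' : C →* C)
    have ht : t c = c ^ (i.gcdA (q ^ v) * s) := monoidHomOfForallMemZpowers_apply_gen hc hdvd'
    refine ⟨t, (MonoidHom.eq_iff_eq_on_generator hc _ _).mpr ?_⟩
    change g c = t (f c)
    rw [hf, hg, map_pow, ht, ← zpow_natCast, ← zpow_natCast, ← zpow_mul, zpow_eq_zpow_iff_modEq,
      hcard, hs]
    push_cast
    rw [Nat.gcd_eq_gcd_ab]
    refine (Int.modEq_iff_dvd.mpr ⟨-(i.gcdB (q ^ v) * s), ?_⟩)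
    push_cast
    ring
  obtain ⟨i, hi⟩ := hpow f
  obtain ⟨j, hj⟩ := hpow g
  obtain ⟨k, -, hk⟩ := (Nat.dvd_prime_pow hq).mp (Nat.gcd_dvd_right i (q ^ v))
  obtain ⟨l, -, hl⟩ := (Nat.dvd_prime_pow hq).mp (Nat.gcd_dvd_right j (q ^ v))
  rcases le_total k l with hkl | hkl
  · obtain ⟨t, ht⟩ := key f g i j hi hj (hk ▸ hl ▸ pow_dvd_pow q hkl)
    exact ⟨t, Or.inr ht⟩
  · obtain ⟨t, ht⟩ := key g f j i hj hi (hk ▸ hl ▸ pow_dvd_pow q hkl)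
    exact ⟨t, Or.inl ht⟩

theorem mul_comm_of_end_mul_comm {K : Type*} [Group K]
    (hcomm : ∀ f g : Monoid.End K, f * g = g * f)
    (hchain : ∀ f g : Monoid.End K, ∃ t, f = t * g ∨ g = t * f) (a b : K) : a * b = b * a := by
  have hcen : ∀ x y : K, ⁅x, y⁆ ∈ center K := fun x y => by
    rw [← innerEnd_eq_one_iff, commutatorElement_def, map_mul, map_mul, map_mul,
      hcomm (innerEnd K x) (innerEnd K y), mul_assoc (innerEnd K y), ← map_mul, mul_inv_cancel,
      map_one, mul_one, ← map_mul, mul_inv_cancel, map_one]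
  let F : K → Monoid.End K := fun z => MonoidHom.mk' (fun x => ⁅x, z⁆) (fun x y => by
    have h1 := mem_center_iff.mp (hcen y z) x
    calc ⁅x * y, z⁆ = x * ⁅y, z⁆ * (z * x⁻¹ * z⁻¹) := by
          simp only [commutatorElement_def]; group
      _ = ⁅y, z⁆ * ⁅x, z⁆ := by
          rw [h1]; simp only [commutatorElement_def]; group
      _ = ⁅x, z⁆ * ⁅y, z⁆ := (mem_center_iff.mp (hcen y z) _).symm)
  have hF : ∀ z x, F z x = ⁅x, z⁆ := fun _ _ => rfl
  obtain ⟨t, ht | ht⟩ := hchain (F a) (F b)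
  · have h1 : F a b = t (F b b) := DFunLike.congr_fun ht b
    rw [hF, hF, commutatorElement_self, map_one, commutatorElement_eq_one_iff_mul_comm] at h1
    exact h1.symm
  · have h1 : F b a = t (F a a) := DFunLike.congr_fun ht a
    rw [hF, hF, commutatorElement_self, map_one, commutatorElement_eq_one_iff_mul_comm] at h1
    exact h1

theorem exists_generator_of_end_chain {K : Type*} [CommGroup K] [Finite (Monoid.End K)]
    (hchain : ∀ f g : Monoid.End K, ∃ t, f = t * g ∨ g = t * f) :
    ∃ a : K, ∀ x, x ∈ zpowers a := by
  have hexp : Monoid.ExponentExists K := by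
    obtain ⟨m, n, hmn, h⟩ := Finite.exists_ne_map_eq_of_infinite
      (β := Monoid.End K) (fun n : ℕ => (powMonoidHom n : K →* K))
    wlog hlt : m < n generalizing m n
    · exact this n m hmn.symm h.symm (lt_of_le_of_ne (not_lt.mp hlt) hmn.symm)
    refine ⟨n - m, Nat.sub_pos_of_lt hlt, fun x => ?_⟩
    have hx : x ^ m = x ^ n := DFunLike.congr_fun h x
    rw [pow_sub _ hlt.le, hx, mul_inv_cancel]
  obtain ⟨a, ha⟩ := Monoid.exists_orderOf_eq_exponent hexp
  have hpos : 0 < orderOf a := ha ▸ Monoid.exponent_pos.mpr hexp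
  obtain ⟨χ, hχ⟩ := exists_character_orderOf_eq a (orderOf_pos_iff.mp hpos)
  obtain ⟨k₀, hk₀⟩ := exists_forall_character_mem_zpowers hpos
    (fun k => by rw [ha]; exact Monoid.pow_exponent_eq_one k) χ
  have hzp : zpowers (χ a) = zpowers (χ k₀) := by
    have hdvd : orderOf (χ k₀) ∣ orderOf a :=
      (orderOf_map_dvd χ k₀).trans (ha ▸ Monoid.order_dvd_exponent k₀)
    have : Finite (zpowers (χ k₀)) :=
      Nat.finite_of_card_ne_zero (by
        rw [Nat.card_zpowers]
        exact (Nat.pos_of_dvd_of_pos hdvd hpos).ne')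
    refine eq_of_le_of_card_ge (zpowers_le.mpr (hk₀ a)) ?_
    rw [Nat.card_zpowers, Nat.card_zpowers, hχ]
    exact Nat.le_of_dvd hpos hdvd
  obtain ⟨r, hra, hr, -⟩ := exists_hom_of_character χ (fun k => hzp ▸ hk₀ k) hχ.symm
  have hrr : ∀ k, r (r k) = r k := fun k => by
    obtain ⟨i, hi⟩ := hr k
    simp only at hi
    rw [← hi, map_zpow, hra]
  let s : K →* K := MonoidHom.id K / r
  have hs : ∀ k, s k = k / r k := fun _ => rfl
  refine ⟨a, fun x => ?_⟩
  obtain ⟨t, ht | ht⟩ := hchain r s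
  · have h1 : r a = t (s a) := DFunLike.congr_fun ht a
    rw [hs, hra, div_self', map_one] at h1
    have h2 := Monoid.pow_exponent_eq_one x
    rw [← ha, h1, orderOf_one, pow_one] at h2
    exact h2 ▸ one_mem _
  · have h1 : s (s x) = t (r (s x)) := DFunLike.congr_fun ht (s x)
    have h2 : r (s x) = 1 := by rw [hs, map_div, hrr, div_self']
    rw [h2, map_one, hs (s x), h2, div_one, hs, div_eq_one] at h1
    rw [h1]
    exact hr x

theorem exists_generator_of_end_equiv {C K : Type*} [Group C] [Group K] {c : C}
    (hc : ∀ x, x ∈ zpowers c) {q v : ℕ} (hq : q.Prime) (hcard : orderOf c = q ^ v)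
    (Ψ : Monoid.End K ≃* Monoid.End C) :
    ∃ k : K, (∀ x, x ∈ zpowers k) ∧ orderOf k = q ^ v := by
  have hcomm : ∀ f g : Monoid.End K, f * g = g * f := fun f g =>
    Ψ.injective (by rw [map_mul, map_mul, end_mul_comm_of_cyclic hc])
  have hchain : ∀ f g : Monoid.End K, ∃ t, f = t * g ∨ g = t * f := fun f g => by
    obtain ⟨t, ht⟩ := exists_end_mul_eq_or_of_cyclic hc hq hcard (Ψ f) (Ψ g)
    refine ⟨Ψ.symm t, ?_⟩
    rwa [← Ψ.injective.eq_iff, ← Ψ.injective.eq_iff, map_mul, map_mul, Ψ.apply_symm_apply]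
  have hcardK : Nat.card (Monoid.End K) = q ^ v := by
    rw [Nat.card_congr Ψ.toEquiv, card_end_eq_orderOf hc, hcard]
  have : Finite (Monoid.End K) :=
    Nat.finite_of_card_ne_zero (hcardK ▸ pow_ne_zero v hq.ne_zero)
  let : CommGroup K :=
    { (inferInstance : Group K) with mul_comm := mul_comm_of_end_mul_comm hcomm hchain }
  obtain ⟨k, hk⟩ := exists_generator_of_end_chain hchain
  exact ⟨k, hk, (card_end_eq_orderOf hk).symm.trans hcardK⟩

end Cyclic

namespace Monoid.End

variable {G H : Type*} [Group G] [Group H]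

/-- Extend an endomorphism of the range of `x` to `H` by precomposing with `x`. -/
def inflate (x : Monoid.End H) (f : Monoid.End (toHom x).range) : Monoid.End H :=
  ((toHom x).range.subtype.comp (toHom f)).comp (toHom x).rangeRestrict

/-- Restrict an endomorphism of `H` to the range of `x` and compose with `x`. -/
def corner (x : Monoid.End H) (F : Monoid.End H) : Monoid.End (toHom x).range :=
  ((toHom x).rangeRestrict.comp (toHom F)).comp (toHom x).range.subtype

theorem map_range_of_mul_self {x : Monoid.End H} (hx : x * x = x) (y : (toHom x).range) :
    x y = y := by
  obtain ⟨_, z, rfl⟩ := y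
  exact DFunLike.congr_fun hx z

theorem rangeRestrict_coe {x : Monoid.End H} (hx : x * x = x) (y : (toHom x).range) :
    (toHom x).rangeRestrict y = y :=
  Subtype.ext (map_range_of_mul_self hx y)

theorem inflate_mul {x : Monoid.End H} (hx : x * x = x) (f g : Monoid.End (toHom x).range) :
    inflate x (f * g) = inflate x f * inflate x g :=
  DFunLike.ext _ _ fun h =>
    congrArg (fun z => (f z : H)) (rangeRestrict_coe hx (g ((toHom x).rangeRestrict h))).symm

theorem corner_inflate {x : Monoid.End H} (hx : x * x = x) (f : Monoid.End (toHom x).range) :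
    corner x (inflate x f) = f :=
  DFunLike.ext _ _ fun y => (rangeRestrict_coe hx _).trans (congrArg f (rangeRestrict_coe hx y))

theorem inflate_corner {x : Monoid.End H} (F : Monoid.End H) :
    inflate x (corner x F) = x * F * x := rfl

theorem inflate_mul_self {x : Monoid.End H} (hx : x * x = x) (f : Monoid.End (toHom x).range) :
    inflate x f * x = inflate x f :=
  DFunLike.ext _ _ fun h =>
    congrArg (fun z => (f z : H)) (rangeRestrict_coe hx ((toHom x).rangeRestrict h))

theorem self_mul_inflate {x : Monoid.End H} (hx : x * x = x) (f : Monoid.End (toHom x).range) :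
    x * inflate x f = inflate x f :=
  DFunLike.ext _ _ fun _ => map_range_of_mul_self hx _

theorem corner_mul {x : Monoid.End H} {F F' : Monoid.End H} (h : F * x = F) :
    corner x (F * F') = corner x F * corner x F' :=
  DFunLike.ext _ _ fun y => Subtype.ext (congrArg x (DFunLike.congr_fun h (F' y)).symm)

/-- For an idempotent `e`, an isomorphism of endomorphism monoids induces one between those of the
ranges of `Φ e` and `e`. -/
def rangeEndEquiv (Φ : Monoid.End G ≃* Monoid.End H) {e : Monoid.End G} (he : e * e = e) :
    Monoid.End (toHom (Φ e)).range ≃* Monoid.End (toHom e).range :=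
  have hx : Φ e * Φ e = Φ e := by rw [← map_mul, he]
  { toFun := fun f => corner e (Φ.symm (inflate (Φ e) f))
    invFun := fun g => corner (Φ e) (Φ (inflate e g))
    left_inv := fun f => by
      dsimp only
      rw [inflate_corner, map_mul, map_mul, Φ.apply_symm_apply, self_mul_inflate hx,
        inflate_mul_self hx, corner_inflate hx]
    right_inv := fun g => by
      dsimp only
      rw [inflate_corner, map_mul, map_mul, Φ.symm_apply_apply, Φ.symm_apply_apply, self_mul_inflate he,
        inflate_mul_self he, corner_inflate he]
    map_mul' := fun f g => by
      rw [inflate_mul hx, map_mul, corner_mul]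
      apply Φ.injective
      rw [map_mul, Φ.apply_symm_apply, inflate_mul_self hx] }

end Monoid.End

theorem IsSchmidtRetraction.exists_generator {p q v : ℕ} {G H : Type*} [Group G] [Group H] {b : G}
    {e : Monoid.End G} (h : IsSchmidtRetraction p q v b e) (Φ : Monoid.End G ≃* Monoid.End H) :
    ∃ c : H, orderOf c = q ^ v ∧ Φ e c = c ∧ ∀ y, Φ e y ∈ zpowers c := by
  have hx : Φ e * Φ e = Φ e := by rw [← map_mul, h.mul_self]
  obtain ⟨⟨c, hc⟩, hgen, hcard⟩ := exists_generator_of_end_equiv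
    (C := (Monoid.End.toHom e).range) (c := ⟨b, b, h.map_gen⟩)
    (by
      rintro ⟨_, g, rfl⟩
      obtain ⟨i, hi⟩ := h.map_mem g
      exact ⟨i, Subtype.ext hi⟩)
    h.prime_right (v := v) ((Subgroup.orderOf_mk _ _).trans h.orderOf_eq)
    (Monoid.End.rangeEndEquiv Φ h.mul_self)
  refine ⟨c, (Subgroup.orderOf_mk c hc).symm.trans hcard, ?_, fun y => ?_⟩
  · exact Monoid.End.map_range_of_mul_self hx ⟨c, hc⟩
  · obtain ⟨i, hi⟩ := hgen ⟨Φ e y, y, rfl⟩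
    exact ⟨i, congrArg Subtype.val hi⟩

theorem commutatorElement_mul_mul_of_mem_center {H : Type*} [Group H] {y z k l : H}
    (hk : k ∈ center H) (hl : l ∈ center H) : ⁅y * k, z * l⁆ = ⁅y, z⁆ := by
  calc ⁅y * k, z * l⁆ = y * (k * (z * l * k⁻¹)) * y⁻¹ * l⁻¹ * z⁻¹ := by
        rw [commutatorElement_def]; group
    _ = y * z * (l * y⁻¹) * l⁻¹ * z⁻¹ := by
        rw [← mem_center_iff.mp hk]; group
    _ = ⁅y, z⁆ := by
        rw [← mem_center_iff.mp hl, commutatorElement_def]; group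

/-- Conjugation in `H`, as a homomorphism to the units of `End H`. -/
def innerUnits (H : Type*) [Group H] : H →* (Monoid.End H)ˣ := (innerEnd H).toHomUnits

theorem innerUnits_eq_one_iff {H : Type*} [Group H] {y : H} :
    innerUnits H y = 1 ↔ y ∈ center H := by
  rw [← innerEnd_eq_one_iff, ← Units.val_inj]
  rfl

theorem ker_innerUnits (H : Type*) [Group H] : (innerUnits H).ker = center H := by
  ext y
  exact innerUnits_eq_one_iff

/-- Conjugation in `G`, transported to `H`. -/
def transportedInnerUnits {G H : Type*} [Group G] [Group H]
    (Φ : Monoid.End G ≃* Monoid.End H) : G →* (Monoid.End H)ˣ :=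
  (Units.map Φ.toMonoidHom).comp (innerUnits G)

theorem ker_transportedInnerUnits {G H : Type*} [Group G] [Group H]
    (Φ : Monoid.End G ≃* Monoid.End H) : (transportedInnerUnits Φ).ker = center G := by
  ext g
  rw [← innerEnd_eq_one_iff, ← Φ.injective.eq_iff, map_one, MonoidHom.mem_ker, ← Units.val_inj]
  rfl

theorem transportedInnerUnits_eq_iff {G H : Type*} [Group G] [Group H]
    {Φ : Monoid.End G ≃* Monoid.End H} {g : G} {y : H} :
    transportedInnerUnits Φ g = innerUnits H y ↔ Φ (innerEnd G g) = innerEnd H y := by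
  rw [← Units.val_inj]
  rfl

/-- The endomorphism of `G` that sends everything to `1`. -/
def Monoid.End.triv (G : Type*) [Group G] : Monoid.End G := (1 : G →* G)

@[simp]
theorem Monoid.End.triv_apply {G : Type*} [Group G] (x : G) : Monoid.End.triv G x = 1 := rfl

theorem Monoid.End.map_triv {G H : Type*} [Group G] [Group H]
    (Φ : Monoid.End G ≃* Monoid.End H) : Φ (triv G) = triv H := by
  have h1 : Φ (triv G) * triv H = triv H := DFunLike.ext _ _ fun _ => map_one (Φ (triv G))
  have h2 : triv G * Φ.symm (triv H) = triv G := rfl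
  rw [← h1, ← h2, map_mul, Φ.apply_symm_apply, mul_assoc]
  rfl

theorem Monoid.End.bijective_of_isUnit {G : Type*} [Group G] {f : Monoid.End G} (hf : IsUnit f) :
    Function.Bijective f := by
  obtain ⟨u, rfl⟩ := hf
  exact Function.bijective_iff_has_inverse.mpr ⟨(u⁻¹ : (Monoid.End G)ˣ).val,
    fun x => DFunLike.congr_fun u.inv_mul x, fun x => DFunLike.congr_fun u.mul_inv x⟩

theorem IsSchmidtRetraction.mul_eq_of_pow_eq_triv {p q v : ℕ} {G : Type*} [Group G] {b : G}
    {e : Monoid.End G} (h : IsSchmidtRetraction p q v b e) {F α : Monoid.End G} (hFe : F * e = F)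
    (heF : e * F = F) (hF : F ^ v = Monoid.End.triv G) (hα : e * α = e) : α * F = F := by
  obtain ⟨j, hj⟩ : F b ∈ zpowers b := by
    rw [← heF]
    exact h.map_mem _
  simp only at hj
  have hpow : ∀ k, (F ^ k) b = b ^ (j ^ k) := by
    intro k
    induction k with
    | zero => rw [pow_zero, pow_zero, zpow_one]; rfl
    | succ k ih =>
      rw [pow_succ]
      change (F ^ k) (F b) = _
      rw [← hj, map_zpow, ih, ← zpow_mul, pow_succ]
  have hq : (q : ℤ) ∣ j := by
    have h1 := hpow v
    rw [hF, Monoid.End.triv_apply, eq_comm, ← orderOf_dvd_iff_zpow_eq_one, h.orderOf_eq] at h1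
    refine (Nat.prime_iff_prime_int.mp h.prime_right).dvd_of_dvd_pow (dvd_trans ?_ h1)
    exact_mod_cast dvd_pow_self q (Nat.one_le_iff_ne_zero.mp h.pos)
  have hcen : b ^ j ∈ center G := by
    obtain ⟨k, rfl⟩ := hq
    rw [zpow_mul, zpow_natCast]
    exact zpow_mem h.gen_pow_mem_center k
  have hbj : (b ^ j) ^ q ^ v = 1 := by
    rw [← zpow_natCast, ← zpow_mul, mul_comm, zpow_mul, zpow_natCast, h.pow_eq_one, one_zpow]
  have hfix : α (b ^ j) = b ^ j := by
    have hcomm : Commute (α (b ^ j)) (b ^ j)⁻¹ := mem_center_iff.mp (inv_mem hcen) _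
    rw [← mul_inv_eq_one]
    refine h.eq_one_of_mem_of_pow ((h.map_eq_one_iff _).mp ?_) ?_
    · have h1 : e (α (b ^ j)) = e (b ^ j) := DFunLike.congr_fun hα _
      rw [map_mul, h1, map_inv, mul_inv_cancel]
    · rw [hcomm.mul_pow, ← map_pow, inv_pow, hbj, map_one, inv_one, mul_one]
  refine DFunLike.ext _ _ fun g => ?_
  obtain ⟨i, hi⟩ := h.map_mem g
  rw [← hFe]
  change α (F (e g)) = F (e g)
  simp only at hi
  rw [← hi, map_zpow, ← hj, map_zpow, hfix]

/-- The data of the image in `H` of a retraction of a Schmidt group `G` under an isomorphism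
of endomorphism monoids: `c` generates the range of `Φ e`. -/
structure IsRetractionImage {p q v : ℕ} {G H : Type*} [Group G] [Group H] {b : G}
    {e : Monoid.End G} (h : IsSchmidtRetraction p q v b e) (Φ : Monoid.End G ≃* Monoid.End H)
    (c : H) : Prop where
  orderOf_eq : orderOf c = q ^ v
  map_gen : Φ e c = c
  map_mem : ∀ y, Φ e y ∈ zpowers c

namespace IsRetractionImage

open Monoid.End

variable {p q v : ℕ} {G H : Type*} [Group G] [Group H] {b : G} {e : Monoid.End G}
  {h : IsSchmidtRetraction p q v b e} {Φ : Monoid.End G ≃* Monoid.End H} {c : H}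

theorem map_of_mem_zpowers (hc : IsRetractionImage h Φ c) {y : H} (hy : y ∈ zpowers c) :
    Φ e y = y := by
  obtain ⟨i, rfl⟩ := hy
  simp only [map_zpow, hc.map_gen]

theorem mul_self (_ : IsRetractionImage h Φ c) : Φ e * Φ e = Φ e := by
  rw [← map_mul, h.mul_self]

theorem ne_end_one (_ : IsRetractionImage h Φ c) : Φ e ≠ 1 := fun h1 =>
  h.ne_end_one (Φ.injective (h1.trans (map_one Φ).symm))

theorem ne_triv (_ : IsRetractionImage h Φ c) : Φ e ≠ triv H := fun h1 =>
  h.ne_one (by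
    have h2 := Φ.injective (h1.trans (map_triv Φ).symm)
    rw [← h.map_gen, h2, triv_apply])

theorem mul_eq_of_not_isUnit (_ : IsRetractionImage h Φ c) {f : Monoid.End H} (hf : ¬ IsUnit f) :
    f * Φ e = f := by
  apply Φ.symm.injective
  rw [map_mul, Φ.symm_apply_apply]
  exact h.mul_eq_of_not_isUnit fun h1 => hf (by simpa using h1.map Φ)

theorem map_eq_one_of_not_isUnit (hc : IsRetractionImage h Φ c) {f : Monoid.End H}
    (hf : ¬ IsUnit f) {u : H} (hu : Φ e u = 1) : f u = 1 := by
  rw [← hc.mul_eq_of_not_isUnit hf]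
  exact (congrArg f hu).trans (map_one f)

theorem map_mul_inv_map (hc : IsRetractionImage h Φ c) (y : H) : Φ e (y * (Φ e y)⁻¹) = 1 := by
  rw [map_mul, map_inv, hc.map_of_mem_zpowers (hc.map_mem y), mul_inv_cancel]

theorem gen_pow_eq_one (hc : IsRetractionImage h Φ c) : c ^ q ^ v = 1 := by
  rw [← hc.orderOf_eq, pow_orderOf_eq_one]

/-- Endomorphisms of the form `f = f e`, `e f = 1` are trivial on a Schmidt group. -/
theorem eq_triv (_ : IsRetractionImage h Φ c) {f : Monoid.End H} (hf : f * Φ e = f)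
    (hf' : Φ e * f = triv H) : f = triv H := by
  obtain ⟨F, rfl⟩ := Φ.surjective f
  rw [← map_mul, Φ.injective.eq_iff] at hf
  rw [← map_mul, ← map_triv Φ, Φ.injective.eq_iff] at hf'
  rw [← map_triv Φ]
  congr 1
  have h1 : F b = 1 := h.eq_one_of_mem_of_pow
    ((h.map_eq_one_iff _).mp (DFunLike.congr_fun hf' b)) (by rw [← map_pow, h.pow_eq_one, map_one])
  refine DFunLike.ext _ _ fun g => ?_
  obtain ⟨i, hi⟩ := h.map_mem g
  rw [← hf]
  change F (e g) = 1
  simp only at hi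
  rw [← hi, map_zpow, h1, one_zpow]

theorem eq_one_of_map_eq_one_of_pow (hc : IsRetractionImage h Φ c) {u : H} (hu : Φ e u = 1)
    (huq : u ^ q ^ v = 1) : u = 1 := by
  have hgen : ∀ x : zpowers c, x ∈ zpowers (⟨c, mem_zpowers c⟩ : zpowers c) := by
    rintro ⟨_, k, rfl⟩
    exact ⟨k, rfl⟩
  have hdvd : orderOf u ∣ orderOf (⟨c, mem_zpowers c⟩ : zpowers c) := by
    rw [orderOf_mk, hc.orderOf_eq]
    exact orderOf_dvd_of_pow_eq_one huq
  let θ : zpowers c →* H := monoidHomOfForallMemZpowers hgen hdvd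
  have hθ : θ ⟨c, mem_zpowers c⟩ = u := monoidHomOfForallMemZpowers_apply_gen hgen hdvd
  let f : Monoid.End H := θ.comp ((toHom (Φ e)).codRestrict (zpowers c) hc.map_mem)
  have hf : ∀ y, f y = θ ⟨Φ e y, hc.map_mem y⟩ := fun _ => rfl
  have h1 : f = triv H := by
    refine hc.eq_triv (DFunLike.ext _ _ fun y => ?_) (DFunLike.ext _ _ fun y => ?_)
    · change f (Φ e y) = f y
      rw [hf, hf]
      exact congrArg θ (Subtype.ext (hc.map_of_mem_zpowers (hc.map_mem y)))
    · change Φ e (f y) = 1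
      obtain ⟨i, hi⟩ := hgen ⟨Φ e y, hc.map_mem y⟩
      simp only at hi
      rw [hf, ← hi, map_zpow, hθ, map_zpow, hu, one_zpow]
  rw [← hθ, ← triv_apply c, ← h1, hf]
  exact congrArg θ (Subtype.ext hc.map_gen.symm)

theorem commute_map (hc : IsRetractionImage h Φ c) (y z : H) : Commute (Φ e y) (Φ e z) := by
  obtain ⟨i, hi⟩ := hc.map_mem y
  obtain ⟨j, hj⟩ := hc.map_mem z
  simp only at hi hj
  rw [← hi, ← hj]
  exact Commute.zpow_zpow_self _ _ _

theorem mul_innerEnd_eq (hc : IsRetractionImage h Φ c) (y : H) : Φ e * innerEnd H y = Φ e := by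
  refine DFunLike.ext _ _ fun z => ?_
  change Φ e (y * z * y⁻¹) = Φ e z
  rw [map_mul, map_mul, (hc.commute_map y z).eq, mul_assoc, ← map_mul, mul_inv_cancel, map_one,
    mul_one]

theorem mul_symm_innerEnd_eq (hc : IsRetractionImage h Φ c) (y : H) :
    e * Φ.symm (innerEnd H y) = e := by
  apply Φ.injective
  rw [map_mul, Φ.apply_symm_apply, hc.mul_innerEnd_eq]

theorem gen_notMem_center (hc : IsRetractionImage h Φ c) : c ∉ center H := by
  intro hcen
  have hcom : ∀ y z : H, z * (Φ e y)⁻¹ = (Φ e y)⁻¹ * z := fun y z => by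
    obtain ⟨i, hi⟩ := hc.map_mem y
    exact mem_center_iff.mp (inv_mem (hi ▸ zpow_mem hcen i)) z
  let y : Monoid.End H := MonoidHom.mk' (fun z => z * (Φ e z)⁻¹) fun z w => by
    rw [map_mul, mul_inv_rev, mul_assoc z (Φ e z)⁻¹, ← hcom z]
    simp only [mul_assoc]
  have hy : ∀ z, y z = z * (Φ e z)⁻¹ := fun _ => rfl
  have hyx : ∀ z, y (Φ e z) = 1 := fun z => by
    rw [hy, hc.map_of_mem_zpowers (hc.map_mem z), mul_inv_cancel]
  have hunit : ¬ IsUnit y := fun hu => hc.ne_triv (DFunLike.ext _ _ fun z =>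
    (bijective_of_isUnit hu).1 ((hyx z).trans (map_one y).symm))
  refine hc.ne_end_one (DFunLike.ext _ _ fun z => ?_)
  have h1 : y z = 1 := by
    rw [← hc.mul_eq_of_not_isUnit hunit]
    exact hyx z
  rw [hy, mul_inv_eq_one] at h1
  exact h1.symm

theorem not_isUnit_of_commute (hc : IsRetractionImage h Φ c) {f : Monoid.End H}
    (hf : ∀ y z, Commute (f y) (f z)) : ¬ IsUnit f := by
  intro hu
  refine hc.gen_notMem_center (mem_center_iff.mpr fun z => ?_)
  obtain ⟨y, rfl⟩ := (bijective_of_isUnit hu).2 c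
  obtain ⟨w, rfl⟩ := (bijective_of_isUnit hu).2 z
  exact hf w y

theorem gen_pow_mem_center (hc : IsRetractionImage h Φ c) : c ^ q ∈ center H := by
  let f : Monoid.End H := MonoidHom.mk' (fun y => Φ e y ^ q) fun y z => by
    rw [map_mul, (hc.commute_map y z).mul_pow]
  have hf : ∀ y, f y = Φ e y ^ q := fun _ => rfl
  have hxx : ∀ y, Φ e (Φ e y) = Φ e y := fun y => hc.map_of_mem_zpowers (hc.map_mem y)
  have hfx : f * Φ e = f := DFunLike.ext _ _ fun y => by
    change f (Φ e y) = f y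
    rw [hf, hf, hxx]
  have hxf : Φ e * f = f := DFunLike.ext _ _ fun y => by
    change Φ e (f y) = f y
    rw [hf, map_pow, hxx]
  have hpow : ∀ k y, (f ^ (k + 1)) y = Φ e y ^ q ^ (k + 1) := by
    intro k
    induction k with
    | zero => intro y; rw [zero_add, pow_one, pow_one, hf]
    | succ k ih =>
      intro y
      rw [pow_succ']
      change f ((f ^ (k + 1)) y) = _
      rw [ih, hf, map_pow, hxx, ← pow_mul, ← pow_succ]
  have hfv : f ^ v = triv H := by
    obtain ⟨k, rfl⟩ : ∃ k, v = k + 1 := ⟨v - 1, (Nat.sub_add_cancel h.pos).symm⟩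
    refine DFunLike.ext _ _ fun y => ?_
    rw [hpow, triv_apply]
    obtain ⟨i, hi⟩ := hc.map_mem y
    simp only at hi
    rw [← hi, ← zpow_natCast, ← zpow_mul, mul_comm, zpow_mul, zpow_natCast, hc.gen_pow_eq_one,
      one_zpow]
  refine mem_center_iff.mpr fun y => ?_
  have key : Φ.symm (innerEnd H y) * Φ.symm f = Φ.symm f := by
    refine h.mul_eq_of_pow_eq_triv ?_ ?_ ?_ (hc.mul_symm_innerEnd_eq y)
    · apply Φ.injective
      rw [map_mul, Φ.apply_symm_apply, hfx]
    · apply Φ.injective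
      rw [map_mul, Φ.apply_symm_apply, hxf]
    · rw [← map_pow, hfv, ← map_triv Φ, Φ.symm_apply_apply]
  rw [← map_mul, Φ.symm.injective.eq_iff] at key
  have h1 : y * f c * y⁻¹ = f c := DFunLike.congr_fun key c
  rw [hf, hc.map_gen, mul_inv_eq_iff_eq_mul] at h1
  exact h1

theorem symm_innerEnd_gen_eq_pow (hc : IsRetractionImage h Φ c) :
    ∃ i, Φ.symm (innerEnd H c) = innerEnd G b ^ i := by
  refine h.exists_eq_innerEnd_pow ?_ ?_
  · have h1 : Φ.symm (innerEnd H c) * e = e := by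
      apply Φ.injective
      rw [map_mul, Φ.apply_symm_apply]
      refine DFunLike.ext _ _ fun y => ?_
      obtain ⟨i, hi⟩ := hc.map_mem y
      change c * Φ e y * c⁻¹ = Φ e y
      simp only at hi
      rw [← hi, mul_inv_eq_iff_eq_mul]
      exact ((Commute.refl c).zpow_right i).eq
    change Φ.symm (innerEnd H c) b = b
    conv_lhs => rw [← h.map_gen]
    exact (DFunLike.congr_fun h1 b).trans h.map_gen
  · rw [← map_pow, ← map_pow, innerEnd_eq_one_iff.mpr hc.gen_pow_mem_center, map_one]

theorem exists_map_innerEnd_gen (hc : IsRetractionImage h Φ c) :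
    ∃ j, Φ (innerEnd G b) = innerEnd H c ^ j := by
  obtain ⟨i, hi⟩ := hc.symm_innerEnd_gen_eq_pow
  have hqi : i.Coprime q := by
    refine ((h.prime_right.coprime_iff_not_dvd).mpr ?_).symm
    rintro ⟨k, rfl⟩
    rw [pow_mul, h.innerEnd_pow_eq_one, one_pow, ← map_one Φ.symm, Φ.symm.injective.eq_iff,
      innerEnd_eq_one_iff] at hi
    exact hc.gen_notMem_center hi
  obtain ⟨j, -, hj⟩ := Nat.exists_mul_mod_eq_one_of_coprime hqi h.prime_right.one_lt
  refine ⟨j, ?_⟩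
  rw [← Φ.symm.injective.eq_iff, Φ.symm_apply_apply, map_pow, hi, ← pow_mul,
    ← Nat.mod_add_div (i * j) q, hj, pow_add, pow_mul, h.innerEnd_pow_eq_one, one_pow, mul_one,
    pow_one]

theorem range_transported_le (hc : IsRetractionImage h Φ c) :
    (transportedInnerUnits Φ).range ≤ (innerUnits H).range := by
  rw [MonoidHom.range_eq_map, map_le_iff_le_comap, top_le_iff]
  obtain ⟨j, hj⟩ := hc.exists_map_innerEnd_gen
  refine h.eq_top_of_forall_conj_mem fun g => ?_
  have h1 : transportedInnerUnits Φ b = innerUnits H (c ^ j) :=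
    transportedInnerUnits_eq_iff.mpr (by rw [hj, map_pow])
  refine ⟨Φ (innerEnd G g) (c ^ j), ?_⟩
  rw [map_mul, map_mul, map_inv, h1, eq_mul_inv_iff_mul_eq]
  exact Units.ext (mul_innerEnd _ _).symm

theorem finite_end (_ : IsRetractionImage h Φ c) : Finite (Monoid.End H) := by
  have := h.finite
  have : Finite (Monoid.End G) := DFunLike.finite _
  exact Finite.of_equiv _ Φ.toEquiv

theorem finiteIndex_center (hc : IsRetractionImage h Φ c) : (center H).FiniteIndex := by
  have := hc.finite_end
  refine ⟨?_⟩
  rw [← ker_innerUnits, index_ker]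
  exact Nat.card_pos.ne'

theorem pow_index_eq_one (hc : IsRetractionImage h Φ c) {u : H} (hu : Φ e u = 1) :
    u ^ (center H).index = 1 := by
  have := hc.finiteIndex_center
  let f : Monoid.End H := (center H).subtype.comp (MonoidHom.transferCenterPow H)
  have hf : ∀ y, f y = y ^ (center H).index := MonoidHom.transferCenterPow_apply
  have hcen : ∀ y, f y ∈ center H := fun y => (MonoidHom.transferCenterPow H y).2
  rw [← hf]
  exact hc.map_eq_one_of_not_isUnit
    (hc.not_isUnit_of_commute fun y z => (mem_center_iff.mp (hcen y) _).symm) hu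

theorem exists_forall_pow_eq_one (hc : IsRetractionImage h Φ c) :
    ∃ n, 0 < n ∧ ∀ y : H, y ^ n = 1 := by
  have := hc.finiteIndex_center
  refine ⟨q ^ v * (center H).index, mul_pos (pow_pos h.prime_right.pos v)
    (Nat.pos_of_ne_zero FiniteIndex.index_ne_zero), fun y => ?_⟩
  rw [pow_mul]
  refine hc.pow_index_eq_one ?_
  obtain ⟨i, hi⟩ := hc.map_mem y
  simp only at hi
  rw [map_pow, ← hi, ← zpow_natCast, ← zpow_mul, mul_comm, zpow_mul, zpow_natCast,
    hc.gen_pow_eq_one, one_zpow]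

theorem map_eq_one_iff (hc : IsRetractionImage h Φ c) {u : H} :
    Φ e u = 1 ↔ u ∈ commutator H := by
  refine ⟨fun hu => ?_, fun hu => ?_⟩
  · by_contra hu'
    obtain ⟨n, hn, hpow⟩ := hc.exists_forall_pow_eq_one
    obtain ⟨f, hfu, hf⟩ := exists_end_commute_ne_one hn hpow hu'
    exact hfu (hc.map_eq_one_of_not_isUnit (hc.not_isUnit_of_commute hf) hu)
  · have hle : commutator H ≤ (toHom (Φ e)).ker := by
      rw [commutator_eq_closure, closure_le]
      rintro _ ⟨y, z, rfl⟩
      change Φ e ⁅y, z⁆ = 1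
      rw [commutatorElement_def, map_mul, map_mul, map_mul, (hc.commute_map y z).eq, map_inv,
        map_inv, mul_inv_cancel_right, mul_inv_cancel]
    exact hle hu

theorem finite_right (hc : IsRetractionImage h Φ c) : Finite H := by
  have := hc.finiteIndex_center
  have h1 : Finite (commutatorSet H) := by
    refine (Set.finite_range fun z : (H ⧸ center H) × (H ⧸ center H) =>
      ⁅z.1.out, z.2.out⁆).subset ?_
    rintro _ ⟨y, z, rfl⟩
    refine ⟨(y, z), ?_⟩
    obtain ⟨k, hk⟩ := QuotientGroup.mk_out_eq_mul (center H) y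
    obtain ⟨l, hl⟩ := QuotientGroup.mk_out_eq_mul (center H) z
    simp only [hk, hl]
    exact commutatorElement_mul_mul_of_mem_center k.2 l.2
  have hker : (toHom (Φ e)).ker = commutator H := by
    ext u
    exact hc.map_eq_one_iff
  have h2 : Finite (toHom (Φ e)).range := by
    have : Finite (zpowers c) := Nat.finite_of_card_ne_zero (by
      rw [Nat.card_zpowers, hc.orderOf_eq]
      exact pow_ne_zero v h.prime_right.ne_zero)
    refine Set.Finite.subset (Set.toFinite (zpowers c : Set H)) ?_
    rintro _ ⟨y, rfl⟩
    exact hc.map_mem y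
  have : Finite (H ⧸ commutator H) := by
    rw [← hker]
    exact Finite.of_equiv _ (QuotientGroup.quotientKerEquivRange (toHom (Φ e))).toEquiv.symm
  exact Finite.of_subgroup_quotient (commutator H)

theorem range_innerUnits_eq (hc : IsRetractionImage h Φ c) :
    (innerUnits H).range = (transportedInnerUnits Φ).range := by
  refine le_antisymm ?_ hc.range_transported_le
  rw [MonoidHom.range_eq_map, map_le_iff_le_comap]
  have hgen : c ∈ comap (innerUnits H) (transportedInnerUnits Φ).range := by
    obtain ⟨i, hi⟩ := hc.symm_innerEnd_gen_eq_pow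
    refine ⟨b ^ i, transportedInnerUnits_eq_iff.mpr ?_⟩
    rw [map_pow, ← hi, Φ.apply_symm_apply]
  have hcomm : commutator H ≤ comap (innerUnits H) (transportedInnerUnits Φ).range := by
    rw [commutator_eq_closure, closure_le]
    rintro _ ⟨y, z, rfl⟩
    obtain ⟨g, hg⟩ := h.exists_mul_eq_innerEnd_mul (hc.mul_symm_innerEnd_eq y)
      (hc.mul_symm_innerEnd_eq z)
    refine ⟨g, ?_⟩
    have h1 : innerUnits H y * innerUnits H z =
        transportedInnerUnits Φ g * (innerUnits H z * innerUnits H y) := by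
      refine Units.ext ?_
      have h2 := congrArg Φ hg
      simp only [map_mul, Φ.apply_symm_apply] at h2
      exact h2
    rw [commutatorElement_def, map_mul, map_mul, map_mul, h1, map_inv, map_inv]
    group
  intro y _
  have h1 := mul_mem (hcomm (hc.map_eq_one_iff.mp (hc.map_mul_inv_map y)))
    (zpowers_le.mpr hgen (hc.map_mem y))
  rwa [inv_mul_cancel_right] at h1

theorem exists_card_eq (h : IsSchmidtRetraction p q v b e) : ∃ a, Nat.card G = p ^ a * q ^ v := by
  have := h.finite
  have : Fact p.Prime := ⟨h.prime_left⟩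
  obtain ⟨a, ha⟩ := IsPGroup.iff_card.mp h.isPGroup
  refine ⟨a, ?_⟩
  have hker : (toHom e).ker = commutator G := by
    ext g
    exact h.map_eq_one_iff g
  have hrange : (toHom e).range = zpowers b := by
    refine le_antisymm ?_ (zpowers_le.mpr ⟨b, h.map_gen⟩)
    rintro _ ⟨g, rfl⟩
    exact h.map_mem g
  rw [← card_mul_index (commutator G), ha, ← hker, index_ker, hrange, Nat.card_zpowers,
    h.orderOf_eq]

theorem isPGroup_right (hc : IsRetractionImage h Φ c) : IsPGroup p (commutator H) := by
  obtain ⟨a, ha⟩ := exists_card_eq h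
  have hdvd : (center H).index ∣ p ^ a * q ^ v := by
    rw [← ha, ← ker_innerUnits, index_ker, hc.range_innerUnits_eq, ← index_ker,
      ker_transportedInnerUnits]
    exact index_dvd_card _
  rintro ⟨u, hu⟩
  refine ⟨a, Subtype.ext ?_⟩
  have hu1 := hc.map_eq_one_iff.mpr hu
  refine hc.eq_one_of_map_eq_one_of_pow (u := u ^ p ^ a) (by rw [map_pow, hu1, one_pow]) ?_
  obtain ⟨k, hk⟩ := hdvd
  rw [← pow_mul, hk, pow_mul, hc.pow_index_eq_one hu1, one_pow]

theorem not_isNilpotent_right (hc : IsRetractionImage h Φ c) : ¬ Group.IsNilpotent H := by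
  intro hn
  apply h.not_nilpotent
  have h1 : Group.IsNilpotent (innerUnits H).range :=
    Group.nilpotent_of_surjective _ (innerUnits H).rangeRestrict_surjective
  rw [hc.range_innerUnits_eq] at h1
  exact Subgroup.isNilpotent_of_ker_le_center (transportedInnerUnits Φ).rangeRestrict
    (by rw [MonoidHom.ker_rangeRestrict, ker_transportedInnerUnits])

theorem sup_zpowers_eq_top (hc : IsRetractionImage h Φ c) :
    commutator H ⊔ zpowers c = ⊤ := by
  refine eq_top_iff.mpr fun y _ => ?_
  have h1 := mul_mem_sup (hc.map_eq_one_iff.mp (hc.map_mul_inv_map y)) (hc.map_mem y)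
  rwa [inv_mul_cancel_right] at h1

theorem inf_zpowers_eq_bot (hc : IsRetractionImage h Φ c) :
    commutator H ⊓ zpowers c = ⊥ := by
  refine eq_bot_iff.mpr fun y hy => ?_
  rw [mem_bot, ← hc.map_of_mem_zpowers hy.2]
  exact hc.map_eq_one_iff.mpr hy.1

/-- A subgroup that covers `H` modulo the centre is everything. -/
theorem eq_top_of_forall_innerUnits (hc : IsRetractionImage h Φ c) {K : Subgroup H}
    (hK : ∀ y, ∃ k ∈ K, innerUnits H k = innerUnits H y) : K = ⊤ := by
  have hfin := hc.finite_right
  have hK' : ∀ y, ∃ k ∈ K, ∃ z ∈ center H, y = k * z := fun y => by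
    obtain ⟨k, hk, hky⟩ := hK y
    refine ⟨k, hk, k⁻¹ * y, ?_, (mul_inv_cancel_left k y).symm⟩
    rw [← innerUnits_eq_one_iff, map_mul, map_inv, hky, inv_mul_cancel]
  have hN : commutator H ≤ K := by
    rw [commutator_eq_closure, closure_le]
    rintro _ ⟨y₁, y₂, rfl⟩
    obtain ⟨k₁, hk₁, z₁, hz₁, rfl⟩ := hK' y₁
    obtain ⟨k₂, hk₂, z₂, hz₂, rfl⟩ := hK' y₂
    rw [commutatorElement_mul_mul_of_mem_center hz₁ hz₂, commutatorElement_def]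
    exact mul_mem (mul_mem (mul_mem hk₁ hk₂) (inv_mem hk₁)) (inv_mem hk₂)
  obtain ⟨k, hk, z, hz, hkz⟩ := hK' c
  have huN : k * (Φ e k)⁻¹ ∈ commutator H := hc.map_eq_one_iff.mp (hc.map_mul_inv_map k)
  have hxk : Φ e k ∈ K := by
    have h1 := mul_mem (inv_mem (hN huN)) hk
    rwa [mul_inv_rev, inv_inv, inv_mul_cancel_right] at h1
  obtain ⟨i, hi⟩ := (isOfFinOrder_of_finite c).mem_powers_iff_mem_zpowers.mpr (hc.map_mem k)
  simp only at hi
  by_cases hqi : q ∣ i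
  · exfalso
    apply hc.gen_notMem_center
    have hcen : Φ e k * z ∈ center H := by
      obtain ⟨m, rfl⟩ := hqi
      rw [← hi, pow_mul]
      exact mul_mem (pow_mem hc.gen_pow_mem_center m) hz
    obtain ⟨a, ha⟩ := hc.isPGroup_right.exists_pow_eq_one_of_mem huN
    have hcu : c = k * (Φ e k)⁻¹ * (Φ e k * z) := by rw [hkz]; group
    have hcomm : Commute (k * (Φ e k)⁻¹) (Φ e k * z) := mem_center_iff.mp hcen _
    have hcp : c ^ p ^ a ∈ center H := by
      rw [hcu, hcomm.mul_pow, ha, one_mul]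
      exact pow_mem hcen _
    have hcop : (p ^ a).Coprime (orderOf c) := by
      rw [hc.orderOf_eq]
      exact Nat.Coprime.pow _ _ ((Nat.coprime_primes h.prime_left h.prime_right).mpr h.ne)
    obtain ⟨m, hm⟩ := exists_pow_eq_self_of_coprime hcop
    exact hm ▸ pow_mem hcp m
  · have hcop : i.Coprime (orderOf c) := by
      rw [hc.orderOf_eq]
      exact (Nat.Coprime.pow_left _ ((h.prime_right.coprime_iff_not_dvd).mpr hqi)).symm
    obtain ⟨m, hm⟩ := exists_pow_eq_self_of_coprime hcop
    have hcK : c ∈ K := by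
      rw [← hm, hi]
      exact pow_mem hxk m
    exact top_le_iff.mp (hc.sup_zpowers_eq_top ▸ sup_le hN (zpowers_le.mpr hcK))

theorem isNilpotent_of_ne_top (hc : IsRetractionImage h Φ c) {K : Subgroup H} (hK : K ≠ ⊤) :
    Group.IsNilpotent K := by
  let L : Subgroup G := comap (transportedInnerUnits Φ) (map (innerUnits H) K)
  have hle : map (innerUnits H) K ≤ (transportedInnerUnits Φ).range := by
    rw [← hc.range_innerUnits_eq, MonoidHom.range_eq_map]
    exact map_mono le_top
  have hmap : map (transportedInnerUnits Φ) L = map (innerUnits H) K := map_comap_eq_self hle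
  have hL : L ≠ ⊤ := fun hL => hK (hc.eq_top_of_forall_innerUnits fun y => by
    have h1 : innerUnits H y ∈ map (innerUnits H) K := by
      rw [← hmap, hL, ← MonoidHom.range_eq_map, ← hc.range_innerUnits_eq]
      exact ⟨y, rfl⟩
    exact h1)
  have h1 : Group.IsNilpotent L := h.nilpotent_of_ne_top L hL
  have h2 : Group.IsNilpotent (map (transportedInnerUnits Φ) L) :=
    Group.nilpotent_of_surjective _ ((transportedInnerUnits Φ).subgroupMap_surjective L)
  rw [hmap] at h2
  refine Subgroup.isNilpotent_of_ker_le_center ((innerUnits H).subgroupMap K) fun k hk => ?_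
  have hk' : (k : H) ∈ center H := innerUnits_eq_one_iff.mp (congrArg Subtype.val hk)
  exact mem_center_iff.mpr fun y => Subtype.ext (mem_center_iff.mp hk' y)

theorem isSchmidtGroup (hc : IsRetractionImage h Φ c) : IsSchmidtGroup p q v H :=
  ⟨hc.finite_right, hc.not_isNilpotent_right, fun _ => hc.isNilpotent_of_ne_top,
    hc.isPGroup_right, c, hc.orderOf_eq, hc.sup_zpowers_eq_top, hc.inf_zpowers_eq_bot⟩

end IsRetractionImage

/-- If `G` is a Schmidt group with parameters `p, q, v` and `H` is any group with
`End(H) ≅ End(G)` as monoids, then `H` is a Schmidt group with the same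
parameters. -/
theorem stmt_16 {G H : Type*} [Group G] [Group H]
    (p q v : ℕ) (hp : p.Prime) (hq : q.Prime) (hpq : p ≠ q) (hv : 1 ≤ v)
    (e : Monoid.End G ≃* Monoid.End H)
    (hG : IsSchmidtGroup p q v G) :
    IsSchmidtGroup p q v H := by
  obtain ⟨b, r, h⟩ := hG.exists_retraction hp hq hpq hv
  obtain ⟨c, hc, hcc, hmem⟩ := h.exists_generator e
  exact IsRetractionImage.isSchmidtGroup (h := h) (Φ := e) ⟨hc, hcc, hmem⟩
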